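/- arXiv:2211.07978 — 5 statements merged into one kernel-verified Lean document; each statement's English description precedes it below -/
import Mathlib

section
/- The bipyramid collapses to its subcomplex generated by the edge {v,a⁺} and the three triangles {u,v,a⁻}, {u,w,a⁻}, {v,w,a⁻}, i.e., to the subcomplex consisting of all faces contained in one of these four faces. -/
/-!
STATEMENT 0: The bipyramid collapses to its subcomplex generated by the edge
{v,a⁺} and the three triangles {u,v,a⁻}, {u,w,a⁻}, {v,w,a⁻}.
-/

namespace PaperFormal

variable {V : Type*}

/-- `K` is a finite abstract simplicial complex: a collection of finite nonempty
sets closed under taking nonempty subsets. -/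
def IsComplex (K : Set (Finset V)) : Prop :=
  (∀ σ ∈ K, σ ≠ ∅) ∧ ∀ σ ∈ K, ∀ τ : Finset V, τ ⊆ σ → τ ≠ ∅ → τ ∈ K

/-- A facet is an inclusion-maximal face. -/
def IsFacet (K : Set (Finset V)) (σ : Finset V) : Prop :=
  σ ∈ K ∧ ∀ τ ∈ K, σ ⊆ τ → σ = τ

/-- An elementary collapse of `K` to `K'` through the free face `σ`, whose unique
containing facet is `F`: it removes `σ` and all faces containing it. -/
def ElemCollapseVia (K K' : Set (Finset V)) (σ F : Finset V) : Prop :=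
  σ ∈ K ∧ ¬ IsFacet K σ ∧ IsFacet K F ∧ σ ⊆ F ∧
    (∀ G, IsFacet K G → σ ⊆ G → G = F) ∧
    K' = {τ ∈ K | ¬ σ ⊆ τ}

/-- An elementary collapse. -/
def ElemCollapse (K K' : Set (Finset V)) : Prop :=
  ∃ σ F, ElemCollapseVia K K' σ F

/-- `K` collapses to `L` via a finite sequence of elementary collapses. -/
def Collapses (K L : Set (Finset V)) : Prop :=
  ∃ (c : ℕ → Set (Finset V)) (n : ℕ), c 0 = K ∧ c n = L ∧
    ∀ i < n, ElemCollapse (c i) (c (i + 1))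

/-- The subcomplex of `K` generated by the faces in `S`: all faces of `K`
contained in some member of `S`. -/
def generatedBy (K S : Set (Finset V)) : Set (Finset V) :=
  {τ ∈ K | ∃ θ ∈ S, τ ⊆ θ}

/-- The bipyramid on vertices `u, v, w, ap, am`: the join of the boundary of the
triangle `uvw` with the edge `ap am`; its faces are the nonempty sets `σ ∪ τ`
with `σ ⊊ {u,v,w}` and `τ ⊆ {ap,am}`. -/
def bipyramid [DecidableEq V] (u v w ap am : V) : Set (Finset V) :=
  {F : Finset V | F ≠ ∅ ∧ F ⊆ {u, v, w, ap, am} ∧ ¬ ({u, v, w} : Finset V) ⊆ F}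

theorem elemCollapse_of {K : Set (Finset V)} (σ F : Finset V) (hσ : σ ∈ K) (hF : F ∈ K)
    (h : σ ⊆ F) (hne : σ ≠ F) (hu : ∀ τ ∈ K, σ ⊆ τ → τ ⊆ F) :
    ElemCollapse K {τ ∈ K | ¬ σ ⊆ τ} := by
  refine ⟨σ, F, hσ, fun hf => hne (hf.2 F hF h), ⟨hF, fun τ hτ hs => ?_⟩, h, ?_, rfl⟩
  · exact hs.antisymm (hu τ hτ (h.trans hs))
  · intro G hG hs
    exact hG.2 F hF (hu G hG.1 hs)

theorem collapses_refl (K : Set (Finset V)) : Collapses K K :=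
  ⟨fun _ => K, 0, rfl, rfl, by simp⟩

theorem collapses_cons {K K' L : Set (Finset V)} (h : ElemCollapse K K')
    (h' : Collapses K' L) : Collapses K L := by
  obtain ⟨c, n, h0, hn, hc⟩ := h'
  refine ⟨fun i => Nat.casesOn i K c, n + 1, rfl, hn, ?_⟩
  intro i hi
  cases i with
  | zero => simpa [h0] using h
  | succ j => exact hc j (by omega)

/-- Lemma 2.2(i): the bipyramid collapses to the subcomplex generated by the edge
`{v,a⁺}` and the triangles `{u,v,a⁻}`, `{u,w,a⁻}`, `{v,w,a⁻}`. -/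
theorem bipyramid_collapses_pos [DecidableEq V] (u v w ap am : V)
    (hdist : ({u, v, w, ap, am} : Finset V).card = 5) :
    Collapses (bipyramid u v w ap am)
      (generatedBy (bipyramid u v w ap am)
        ({{v, ap}, {u, v, am}, {u, w, am}, {v, w, am}} : Set (Finset V))) := by
  have hd : u ≠ v ∧ u ≠ w ∧ u ≠ ap ∧ u ≠ am ∧ v ≠ w ∧ v ≠ ap ∧ v ≠ am ∧ w ≠ ap ∧ w ≠ am
      ∧ ap ≠ am := by
    have h4 : ∀ a b c d : V, ({a, b, c, d} : Finset V).card ≤ 4 :=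
      fun a b c d => Finset.card_le_four
    refine ⟨?_, ?_, ?_, ?_, ?_, ?_, ?_, ?_, ?_, ?_⟩ <;> rintro rfl
    · have := h4 u w ap am; simp at hdist; omega
    · have := h4 u v ap am
      rw [show ({u, v, u, ap, am} : Finset V) = {u, v, ap, am} by grind] at hdist; omega
    · have := h4 u v w am
      rw [show ({u, v, w, u, am} : Finset V) = {u, v, w, am} by grind] at hdist; omega
    · have := h4 u v w ap
      rw [show ({u, v, w, ap, u} : Finset V) = {u, v, w, ap} by grind] at hdist; omega
    · have := h4 u v ap am
      rw [show ({u, v, v, ap, am} : Finset V) = {u, v, ap, am} by grind] at hdist; omega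
    · have := h4 u v w am
      rw [show ({u, v, w, v, am} : Finset V) = {u, v, w, am} by grind] at hdist; omega
    · have := h4 u v w ap
      rw [show ({u, v, w, ap, v} : Finset V) = {u, v, w, ap} by grind] at hdist; omega
    · have := h4 u v w am
      rw [show ({u, v, w, w, am} : Finset V) = {u, v, w, am} by grind] at hdist; omega
    · have := h4 u v w ap
      rw [show ({u, v, w, ap, w} : Finset V) = {u, v, w, ap} by grind] at hdist; omega
    · have := h4 u v w ap
      rw [show ({u, v, w, ap, ap} : Finset V) = {u, v, w, ap} by grind] at hdist; omega
  clear hdist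
  obtain ⟨h1, h2, h3, h4, h5, h6, h7, h8, h9, h10⟩ := hd
  refine collapses_cons (elemCollapse_of {u, w, ap} {u, w, ap, am} ?_ ?_ ?_ ?_ ?_) ?_
  · simp [bipyramid, Finset.insert_subset_iff]; grind
  · simp [bipyramid, Finset.insert_subset_iff]; grind
  · grind
  · intro h; have := Finset.ext_iff.1 h am; grind
  · intro τ hτ hs x hx
    simp only [bipyramid, Set.mem_ofPred_eq, Finset.insert_subset_iff,
      Finset.singleton_subset_iff] at hτ hs
    grind
  refine collapses_cons (elemCollapse_of {u, ap} {u, v, ap, am} ?_ ?_ ?_ ?_ ?_) ?_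
  · simp [bipyramid, Finset.insert_subset_iff]; grind
  · simp [bipyramid, Finset.insert_subset_iff]; grind
  · grind
  · intro h; have := Finset.ext_iff.1 h v; grind
  · intro τ hτ hs x hx
    simp only [bipyramid, Set.mem_ofPred_eq, Finset.insert_subset_iff,
      Finset.singleton_subset_iff] at hτ hs
    grind
  refine collapses_cons (elemCollapse_of {w, ap} {v, w, ap, am} ?_ ?_ ?_ ?_ ?_) ?_
  · simp [bipyramid, Finset.insert_subset_iff]; grind
  · simp [bipyramid, Finset.insert_subset_iff]; grind
  · grind
  · intro h; have := Finset.ext_iff.1 h v; grind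
  · intro τ hτ hs x hx
    simp only [bipyramid, Set.mem_ofPred_eq, Finset.insert_subset_iff,
      Finset.singleton_subset_iff] at hτ hs
    grind
  refine collapses_cons (elemCollapse_of {ap, am} {v, ap, am} ?_ ?_ ?_ ?_ ?_) ?_
  · simp [bipyramid, Finset.insert_subset_iff]; grind
  · simp [bipyramid, Finset.insert_subset_iff]; grind
  · grind
  · grind
  · intro τ hτ hs x hx
    simp only [bipyramid, Set.mem_ofPred_eq, Finset.insert_subset_iff,
      Finset.singleton_subset_iff] at hτ hs
    grind
  convert collapses_refl _ using 1
  ext τ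
  simp only [generatedBy, bipyramid, Set.mem_ofPred_eq, Finset.insert_subset_iff,
      Finset.singleton_subset_iff, Set.mem_insert_iff, Set.mem_singleton_iff,
      exists_eq_or_imp, exists_eq_left]
  constructor
  · rintro ⟨⟨hn, hs, hu⟩, h⟩
    grind
  · rintro ⟨⟨⟨⟨⟨hn, hs, hu⟩, k1⟩, k2⟩, k3⟩, k4⟩
    refine ⟨⟨hn, hs, hu⟩, ?_⟩
    by_cases hap : ap ∈ τ
    · left; grind
    · right
      by_cases hw : w ∈ τ
      · right
        by_cases hv : v ∈ τ
        · right; grind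
        · left; grind
      · left; grind

end PaperFormal
end

section
/- The bipyramid collapses to its subcomplex generated by the edge {v,a⁻} and the three triangles {u,v,a⁺}, {u,w,a⁺}, {v,w,a⁺}, i.e., to the subcomplex consisting of all faces contained in one of these four faces. -/
/-!
STATEMENT 1: The bipyramid collapses to its subcomplex generated by the edge
{v,a⁻} and the three triangles {u,v,a⁺}, {u,w,a⁺}, {v,w,a⁺}.
-/

namespace PaperFormal

variable {V : Type*}

theorem elemCollapse_aux {K : Set (Finset V)} (σ F : Finset V) (hσ : σ ∈ K) (hF : F ∈ K)
    (hs : σ ⊆ F) (hne : ¬ F ⊆ σ) (h : ∀ τ ∈ K, σ ⊆ τ → τ ⊆ F) :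
    ElemCollapse K {τ ∈ K | ¬ σ ⊆ τ} := by
  refine ⟨σ, F, hσ, fun hf => hne (hf.2 F hF hs).ge, ⟨hF, fun τ hτ hFτ => ?_⟩, hs,
    fun G hG hsG => hG.2 F hF (h G hG.1 hsG), rfl⟩
  exact Finset.Subset.antisymm hFτ (h τ hτ (hs.trans hFτ))

theorem collapses_four {K0 K1 K2 K3 K4 : Set (Finset V)} (h0 : ElemCollapse K0 K1)
    (h1 : ElemCollapse K1 K2) (h2 : ElemCollapse K2 K3) (h3 : ElemCollapse K3 K4) :
    Collapses K0 K4 := by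
  refine ⟨fun i => match i with
    | 0 => K0 | 1 => K1 | 2 => K2 | 3 => K3 | _ => K4, 4, rfl, rfl, ?_⟩
  intro i hi
  interval_cases i
  · exact h0
  · exact h1
  · exact h2
  · exact h3

theorem distinct_aux [DecidableEq V] {u v w ap am : V}
    (hdist : ({u, v, w, ap, am} : Finset V).card = 5) :
    [u, v, w, ap, am].Nodup := by
  rw [← Multiset.coe_nodup, ← Multiset.toFinset_card_eq_card_iff_nodup]
  simpa using hdist

/-- Lemma 2.2(ii): the bipyramid collapses to the subcomplex generated by the edge
`{v,a⁻}` and the triangles `{u,v,a⁺}`, `{u,w,a⁺}`, `{v,w,a⁺}`. -/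
theorem bipyramid_collapses_neg [DecidableEq V] (u v w ap am : V)
    (hdist : ({u, v, w, ap, am} : Finset V).card = 5) :
    Collapses (bipyramid u v w ap am)
      (generatedBy (bipyramid u v w ap am)
        ({{v, am}, {u, v, ap}, {u, w, ap}, {v, w, ap}} : Set (Finset V))) := by
  have hd := distinct_aux hdist
  simp only [List.nodup_cons, List.mem_cons, List.not_mem_nil, or_false, not_or] at hd
  obtain ⟨⟨huv, huw, hup, hum⟩, ⟨hvw, hvp, hvm⟩, ⟨hwp, hwm⟩, hpm, -⟩ := hd
  have e0 := elemCollapse_aux (K := bipyramid u v w ap am) {u, w, am} {u, w, ap, am}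
    (by simp [bipyramid, Finset.subset_iff]; grind)
    (by simp [bipyramid, Finset.subset_iff]; grind)
    (by grind) (by simp [Finset.subset_iff]; grind)
    (by simp [bipyramid, Finset.subset_iff]; grind)
  have e1 := elemCollapse_aux
    (K := {τ ∈ bipyramid u v w ap am | ¬ {u, w, am} ⊆ τ}) {u, am} {u, v, ap, am}
    (by simp [bipyramid, Finset.subset_iff]; grind)
    (by simp [bipyramid, Finset.subset_iff]; grind)
    (by grind) (by simp [Finset.subset_iff]; grind)
    (by simp [bipyramid, Finset.subset_iff]; grind)
  have e2 := elemCollapse_aux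
    (K := {τ ∈ {τ ∈ bipyramid u v w ap am | ¬ {u, w, am} ⊆ τ} | ¬ {u, am} ⊆ τ})
    {w, am} {v, w, ap, am}
    (by simp [bipyramid, Finset.subset_iff]; grind)
    (by simp [bipyramid, Finset.subset_iff]; grind)
    (by grind) (by simp [Finset.subset_iff]; grind)
    (by simp [bipyramid, Finset.subset_iff]; grind)
  have e3 := elemCollapse_aux
    (K := {τ ∈ {τ ∈ {τ ∈ bipyramid u v w ap am | ¬ {u, w, am} ⊆ τ} | ¬ {u, am} ⊆ τ} |
      ¬ {w, am} ⊆ τ})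
    {ap, am} {v, ap, am}
    (by simp [bipyramid, Finset.subset_iff]; grind)
    (by simp [bipyramid, Finset.subset_iff]; grind)
    (by grind) (by simp [Finset.subset_iff]; grind)
    (by simp [bipyramid, Finset.subset_iff]; grind)
  convert collapses_four e0 e1 e2 e3 using 1
  clear e0 e1 e2 e3 hdist
  ext τ
  simp only [generatedBy, bipyramid, Finset.subset_iff, Set.mem_setOf_eq, Set.mem_insert_iff,
    Set.mem_singleton_iff, Finset.mem_insert, Finset.mem_singleton, exists_eq_or_imp,
    exists_eq_left, forall_eq_or_imp, forall_eq]
  constructor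
  · grind
  · rintro ⟨⟨⟨⟨⟨h1, h2, h3⟩, h4⟩, h5⟩, h6⟩, h7⟩
    refine ⟨⟨h1, h2, h3⟩, ?_⟩
    by_cases hm : am ∈ τ
    · left; grind
    · by_cases hu : u ∈ τ
      · by_cases hv : v ∈ τ
        · right; left; grind
        · right; right; left; grind
      · right; right; right; grind
end PaperFormal
end

section
/- Assume the bipyramid B (on vertices u,v,w,a⁺,a⁻) is a subcomplex of a finite simplicial complex K such that the constraint complex of B in K is exactly the 1-dimensional subcomplex formed by the five edges {u,v}, {u,w}, {v,w}, {v,a⁺}, {v,a⁻} and their vertices. Then there is no sequence of elementary collapses of K in which both {v,a⁺} and {v,a⁻} are removed strictly before any of the three edges {u,v}, {u,w}, {v,w} is removed, with {v,a⁺} removed by an elementary collapse whose unique containing facet is a triangle of K not belonging to B, and likewise {v,a⁻} removed by an elementary collapse whose unique containing facet is a triangle of K not belonging to B. -/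
/-!
STATEMENT 2: If the bipyramid B sits in a complex K with constraint complex
exactly the five edges {u,v},{u,w},{v,w},{v,a⁺},{v,a⁻} (and their vertices),
then no collapsing sequence of K removes both {v,a⁺} and {v,a⁻} strictly before
all three edges {u,v},{u,w},{v,w}, via collapses whose unique containing facet
is a triangle of K outside B.
-/

namespace PaperFormal

variable {V : Type*}

/-- The constraint complex of `B` in `K`: the faces of `B` contained in some face
of `K` not belonging to `B`. -/
def constraintComplex (K B : Set (Finset V)) : Set (Finset V) :=
  {σ ∈ B | ∃ τ ∈ K, τ ∉ B ∧ σ ⊆ τ}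

/-- Relative 2-chains of the bipyramid with boundary the triangle `012`. -/
def chainS (a b c : Bool) : Finset (Finset (Fin 5)) :=
  symmDiff {{0, 1, 3}, {0, 2, 3}, {1, 2, 3}}
    (symmDiff (if a then Finset.powersetCard 3 {0, 1, 3, 4} else ∅)
      (symmDiff (if b then Finset.powersetCard 3 {0, 2, 3, 4} else ∅)
        (if c then Finset.powersetCard 3 {1, 2, 3, 4} else ∅)))

set_option synthInstance.maxHeartbeats 400000 in
set_option synthInstance.maxSize 1000 in
theorem chainS_step : ∀ F : Finset (Fin 5), ¬ ({0, 1, 2} : Finset (Fin 5)) ⊆ F →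
    ∀ σ ∈ F.powerset, σ ≠ ∅ → σ ≠ F →
    ¬ σ ⊆ {0, 1} → ¬ σ ⊆ {0, 2} → ¬ σ ⊆ {1, 2} →
    ∀ a b c : Bool, (∀ T ∈ chainS a b c, σ ⊆ T → T ⊆ F) →
    ∃ a' b' c' : Bool, ∀ T ∈ chainS a' b' c', ¬ σ ⊆ T ∧ (T ∈ chainS a b c ∨ T ⊆ F) := by
  decide +kernel

theorem chainS_card : ∀ a b c : Bool, ∀ T ∈ chainS a b c,
    T.card = 3 ∧ ¬ ({0, 1, 2} : Finset (Fin 5)) ⊆ T := by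
  decide +kernel

theorem chainS_uv : ∀ a b c : Bool,
    ({0, 1, 3} : Finset (Fin 5)) ∈ chainS a b c ∨ ({0, 1, 4} : Finset (Fin 5)) ∈ chainS a b c := by
  decide +kernel

theorem collapse_complex {K K' : Set (Finset V)} (hK : IsComplex K) (h : ElemCollapse K K') :
    IsComplex K' ∧ K' ⊆ K := by
  obtain ⟨σ, F, -, -, -, -, -, rfl⟩ := h
  refine ⟨⟨fun τ hτ => hK.1 τ hτ.1, fun τ hτ ρ hρ hne => ⟨hK.2 τ hτ.1 ρ hρ hne, fun h => hτ.2 (h.trans hρ)⟩⟩,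
    fun τ hτ => hτ.1⟩

theorem exists_facet {K : Set (Finset V)} (hf : K.Finite) {T : Finset V} (hT : T ∈ K) :
    ∃ G, IsFacet K G ∧ T ⊆ G := by
  obtain ⟨G, hG, hm⟩ := hf.exists_le_maximal hT
  exact ⟨G, ⟨hm.1, fun τ hτ h => le_antisymm h (hm.2 hτ h)⟩, hG⟩

/-- A triangle of `B` through the removed edge is already gone. -/
theorem tri_gone {K K' B : Set (Finset V)} (hf : K.Finite) {e T σ F : Finset V}
    (he : e ∈ K) (he' : e ∉ K') (h : ElemCollapseVia K K' σ F) (hF : F.card = 3) (hFB : F ∉ B)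
    (hT : T.card = 3) (hTB : T ∈ B) (heT : e ⊆ T) : T ∉ K := by
  intro hTK
  obtain ⟨-, -, -, -, hu, rfl⟩ := h
  have hσ : σ ⊆ e := by
    by_contra hc
    exact he' ⟨he, hc⟩
  obtain ⟨G, hG, hTG⟩ := exists_facet hf hTK
  have := hu G hG (hσ.trans (heT.trans hTG))
  subst this
  have := Finset.eq_of_subset_of_card_le hTG (by omega)
  exact hFB (this ▸ hTB)

theorem step_inv {L L' K B : Set (Finset V)} (hL : IsComplex L) (hf : L.Finite) (hLK : L ⊆ K)
    (f : Fin 5 ↪ V)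
    (hB : ∀ F : Finset V, F ∈ B ↔ ∃ F' : Finset (Fin 5), F' ≠ ∅ ∧ ¬ ({0, 1, 2} : Finset (Fin 5)) ⊆ F' ∧ F = F'.map f)
    (hcc : ∀ T ∈ B, T.card = 3 → ∀ τ ∈ K, T ⊆ τ → τ ∈ B)
    (h : ElemCollapse L L')
    (h01 : ({0, 1} : Finset (Fin 5)).map f ∈ L')
    (h02 : ({0, 2} : Finset (Fin 5)).map f ∈ L')
    (h12 : ({1, 2} : Finset (Fin 5)).map f ∈ L')
    (hinv : ∃ a b c : Bool, ∀ T ∈ chainS a b c, T.map f ∈ L) :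
    ∃ a b c : Bool, ∀ T ∈ chainS a b c, T.map f ∈ L' := by
  obtain ⟨a, b, c, hS⟩ := hinv
  obtain ⟨σ, F, hσL, hσF, hF, hsub, hu, rfl⟩ := h
  by_cases hex : ∃ T ∈ chainS a b c, σ ⊆ T.map f
  swap
  · push Not at hex
    exact ⟨a, b, c, fun T hT => ⟨hS T hT, hex T hT⟩⟩
  have key : ∀ T ∈ chainS a b c, σ ⊆ T.map f → T.map f ⊆ F ∧ F ∈ B := by
    intro T hT hs
    obtain ⟨G, hG, hTG⟩ := exists_facet hf (hS T hT)
    have hGF := hu G hG (hs.trans hTG)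
    subst hGF
    obtain ⟨h3, h012⟩ := chainS_card a b c T hT
    refine ⟨hTG, hcc (T.map f) ((hB _).2 ⟨T, ?_, h012, rfl⟩) (by simpa using h3) _ (hLK hG.1) hTG⟩
    rintro rfl
    simp at h3
  obtain ⟨T0, hT0, hs0⟩ := hex
  obtain ⟨F', hF'ne, hF', rfl⟩ := (hB F).1 (key T0 hT0 hs0).2
  obtain ⟨σ', hσ', rfl⟩ := Finset.subset_map_iff.1 hsub
  obtain ⟨a', b', c', hS'⟩ := chainS_step F' hF' σ' (Finset.mem_powerset.2 hσ')
    (by rintro rfl; exact hL.1 _ hσL (by simp))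
    (by rintro rfl; exact hσF hF)
    (fun h => h01.2 (Finset.map_subset_map.2 h))
    (fun h => h02.2 (Finset.map_subset_map.2 h))
    (fun h => h12.2 (Finset.map_subset_map.2 h))
    a b c (fun T hT hs => Finset.map_subset_map.1 (key T hT (Finset.map_subset_map.2 hs)).1)
  refine ⟨a', b', c', fun T hT => ?_⟩
  obtain ⟨h1, h2⟩ := hS' T hT
  refine ⟨?_, fun h => h1 (Finset.map_subset_map.1 h)⟩
  rcases h2 with h2 | h2
  · exact hS T h2
  · refine hL.2 _ hF.1 _ (Finset.map_subset_map.2 h2) ?_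
    have := (chainS_card _ _ _ T hT).1
    intro h0
    rw [Finset.map_eq_empty] at h0
    subst h0
    simp at this

/-- Lemma 2.2(iii). -/
theorem bipyramid_blocked [DecidableEq V] (u v w ap am : V)
    (hdist : ({u, v, w, ap, am} : Finset V).card = 5)
    (K : Set (Finset V)) (hK : IsComplex K) (hKfin : K.Finite)
    (hBK : bipyramid u v w ap am ⊆ K)
    (hcc : constraintComplex K (bipyramid u v w ap am) =
      ({{u}, {v}, {w}, {ap}, {am}, {u, v}, {u, w}, {v, w}, {v, ap}, {v, am}} :
        Set (Finset V))) :
    ¬ ∃ (c : ℕ → Set (Finset V)) (n : ℕ), c 0 = K ∧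
      (∀ t < n, ElemCollapse (c t) (c (t + 1))) ∧
      (∃ i < n,
        ({v, ap} : Finset V) ∈ c i ∧ ({v, ap} : Finset V) ∉ c (i + 1) ∧
        (∃ σ F, ElemCollapseVia (c i) (c (i + 1)) σ F ∧ F.card = 3 ∧
          F ∉ bipyramid u v w ap am) ∧
        ({u, v} : Finset V) ∈ c (i + 1) ∧ ({u, w} : Finset V) ∈ c (i + 1) ∧
        ({v, w} : Finset V) ∈ c (i + 1)) ∧
      (∃ j < n,
        ({v, am} : Finset V) ∈ c j ∧ ({v, am} : Finset V) ∉ c (j + 1) ∧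
        (∃ σ F, ElemCollapseVia (c j) (c (j + 1)) σ F ∧ F.card = 3 ∧
          F ∉ bipyramid u v w ap am) ∧
        ({u, v} : Finset V) ∈ c (j + 1) ∧ ({u, w} : Finset V) ∈ c (j + 1) ∧
        ({v, w} : Finset V) ∈ c (j + 1)) := by
  rintro ⟨c, n, h0, hc, ⟨i, hi, hvp, hvp', ⟨σ, F, hvia, hF3, hFB⟩, hi1, hi2, hi3⟩,
    ⟨j, hj, hvm, hvm', ⟨σ', F', hvia', hF3', hFB'⟩, hj1, hj2, hj3⟩⟩
  have himg : (Finset.univ : Finset (Fin 5)).image ![u, v, w, ap, am] = {u, v, w, ap, am} := by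
    ext x
    simp [Fin.exists_fin_succ, eq_comm]
  have hinj : Function.Injective ![u, v, w, ap, am] := by
    have : ((Finset.univ : Finset (Fin 5)).image ![u, v, w, ap, am]).card =
        (Finset.univ : Finset (Fin 5)).card := by
      rw [himg, hdist]; rfl
    simpa using Finset.card_image_iff.1 this
  obtain ⟨f, hf⟩ : ∃ f : Fin 5 ↪ V, (f : Fin 5 → V) = ![u, v, w, ap, am] := ⟨⟨_, hinj⟩, rfl⟩
  have f0 : f 0 = u := by rw [hf]; rfl
  have f1 : f 1 = v := by rw [hf]; rfl
  have f2 : f 2 = w := by rw [hf]; rfl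
  have f3 : f 3 = ap := by rw [hf]; rfl
  have f4 : f 4 = am := by rw [hf]; rfl
  have huniv : ({u, v, w, ap, am} : Finset V) = Finset.univ.map f := by
    rw [← himg, Finset.map_eq_image, hf]
  have huvw : ({u, v, w} : Finset V) = ({0, 1, 2} : Finset (Fin 5)).map f := by
    simp [f0, f1, f2]
  have hB : ∀ F : Finset V, F ∈ bipyramid u v w ap am ↔ ∃ F' : Finset (Fin 5),
      F' ≠ ∅ ∧ ¬ ({0, 1, 2} : Finset (Fin 5)) ⊆ F' ∧ F = F'.map f := by
    intro F
    constructor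
    · rintro ⟨h1, h2, h3⟩
      rw [huniv] at h2
      obtain ⟨F', -, rfl⟩ := Finset.subset_map_iff.1 h2
      refine ⟨F', by simpa using h1, ?_, rfl⟩
      rwa [huvw, Finset.map_subset_map] at h3
    · rintro ⟨F', h1, h2, rfl⟩
      refine ⟨by simpa using h1, ?_, ?_⟩
      · rw [huniv, Finset.map_subset_map]; exact Finset.subset_univ _
      · rwa [huvw, Finset.map_subset_map]
  have hcc' : ∀ T ∈ bipyramid u v w ap am, T.card = 3 → ∀ τ ∈ K, T ⊆ τ →
      τ ∈ bipyramid u v w ap am := by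
    intro T hT h3 τ hτ hs
    by_contra hn
    have hm : T ∈ constraintComplex K (bipyramid u v w ap am) := ⟨hT, τ, hτ, hn, hs⟩
    rw [hcc] at hm
    have : T.card ≤ 2 := by
      simp only [Set.mem_insert_iff, Set.mem_singleton_iff] at hm
      rcases hm with rfl | rfl | rfl | rfl | rfl | rfl | rfl | rfl | rfl | rfl <;>
        first | exact Finset.card_le_two | simp
    omega
  have hcx : ∀ t ≤ n, IsComplex (c t) ∧ c t ⊆ K := by
    intro t
    induction t with
    | zero => intro _; rw [h0]; exact ⟨hK, subset_rfl⟩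
    | succ t ih =>
      intro ht
      obtain ⟨h1, h2⟩ := ih (by omega)
      obtain ⟨h3, h4⟩ := collapse_complex h1 (hc t (by omega))
      exact ⟨h3, h4.trans h2⟩
  have hfin : ∀ t ≤ n, (c t).Finite := fun t ht => hKfin.subset (hcx t ht).2
  have hanti : ∀ s t, s ≤ t → t ≤ n → c t ⊆ c s := by
    intro s t hst
    induction t, hst using Nat.le_induction with
    | base => intro _; exact subset_rfl
    | succ t hst ih =>
      intro ht
      exact (collapse_complex (hcx t (by omega)).1 (hc t (by omega))).2.trans (ih (by omega))
  obtain ⟨m, hmn, him, hjm, hm1, hm2, hm3⟩ : ∃ m < n, i ≤ m ∧ j ≤ m ∧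
      ({u, v} : Finset V) ∈ c (m + 1) ∧ ({u, w} : Finset V) ∈ c (m + 1) ∧
        ({v, w} : Finset V) ∈ c (m + 1) := by
    rcases le_total i j with h | h
    · exact ⟨j, hj, h, le_rfl, hj1, hj2, hj3⟩
    · exact ⟨i, hi, le_rfl, h, hi1, hi2, hi3⟩
  have hinv : ∀ t ≤ m, ∃ a b d : Bool, ∀ T ∈ chainS a b d, T.map f ∈ c t := by
    intro t
    induction t with
    | zero =>
      intro _
      refine ⟨false, false, false, fun T hT => ?_⟩
      rw [h0]
      obtain ⟨h3, h4⟩ := chainS_card _ _ _ T hT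
      refine hBK ((hB _).2 ⟨T, ?_, h4, rfl⟩)
      rintro rfl
      simp at h3
    | succ t ih =>
      intro ht
      have hsub := hanti (t + 1) (m + 1) (by omega) (by omega)
      refine step_inv (hcx t (by omega)).1 (hfin t (by omega)) (hcx t (by omega)).2 f hB hcc'
        (hc t (by omega)) ?_ ?_ ?_ (ih (by omega))
      · simpa [f0, f1] using hsub hm1
      · simpa [f0, f2] using hsub hm2
      · simpa [f1, f2] using hsub hm3
  have g3 : ({0, 1, 3} : Finset (Fin 5)).map f ∉ c i := by
    refine tri_gone (hfin i hi.le) hvp hvp' hvia hF3 hFB (by simp)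
      ((hB _).2 ⟨_, by decide, by decide, rfl⟩) ?_
    have : ({v, ap} : Finset V) = ({1, 3} : Finset (Fin 5)).map f := by simp [f1, f3]
    rw [this, Finset.map_subset_map]
    decide
  have g4 : ({0, 1, 4} : Finset (Fin 5)).map f ∉ c j := by
    refine tri_gone (hfin j hj.le) hvm hvm' hvia' hF3' hFB' (by simp)
      ((hB _).2 ⟨_, by decide, by decide, rfl⟩) ?_
    have : ({v, am} : Finset V) = ({1, 4} : Finset (Fin 5)).map f := by simp [f1, f4]
    rw [this, Finset.map_subset_map]
    decide
  obtain ⟨a, b, d, hS⟩ := hinv m le_rfl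
  rcases chainS_uv a b d with h | h
  · exact g3 (hanti i m him hmn.le (hS _ h))
  · exact g4 (hanti j m hjm hmn.le (hS _ h))

end PaperFormal
end

section
/- Let B be a triangulated 3-ball and let Δ be a 3-face of B with vertices a, b, c, d. Assume the edges {a,d}, {b,d}, {c,d} belong to ∂B, and at least two of the triangles {a,b,d}, {a,c,d}, {b,c,d} do not belong to ∂B. Then Δ is not free for shelling in B; that is, the subcomplex of faces of Δ contained in ∂B does not have polyhedron homeomorphic to a closed 2-dimensional ball. -/
/-!
STATEMENT 5 (Observation 9.3): Let B be a triangulated 3-ball and Δ = {a,b,c,d}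
a 3-face of B. If the edges {a,d},{b,d},{c,d} belong to ∂B while at least two of
the triangles {a,b,d},{a,c,d},{b,c,d} do not, then Δ is not free for shelling.
-/

open scoped Classical

namespace PaperFormal

variable {V : Type*}

/-- `K` is pure of dimension `d`. -/
def PureDim (K : Set (Finset V)) (d : ℕ) : Prop :=
  K.Nonempty ∧ ∀ σ, IsFacet K σ → σ.card = d + 1

/-- The boundary of a pure `d`-dimensional complex `K`. -/
def bdry (K : Set (Finset V)) (d : ℕ) : Set (Finset V) :=
  generatedBy K {σ : Finset V | σ ∈ K ∧ σ.card = d ∧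
    ∃! F, F ∈ K ∧ F.card = d + 1 ∧ σ ⊆ F}

/-- The polyhedron of a collection of geometric faces. -/
def poly {N : ℕ} (S : Set (Finset (EuclideanSpace ℝ (Fin N)))) :
    Set (EuclideanSpace ℝ (Fin N)) :=
  ⋃ σ ∈ S, convexHull ℝ (σ : Set (EuclideanSpace ℝ (Fin N)))

/-- `S` is homeomorphic to the closed `d`-dimensional ball. -/
def IsBallSet {N : ℕ} (d : ℕ) (S : Set (EuclideanSpace ℝ (Fin N))) : Prop :=
  Nonempty (↥S ≃ₜ ↥(Metric.closedBall (0 : EuclideanSpace ℝ (Fin d)) 1))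

theorem no_inj_real {E : Type*} [NormedAddCommGroup E] [NormedSpace ℝ E]
    (h : 1 < Module.rank ℝ E) (f : E → ℝ) (hf : Continuous f) (hi : Function.Injective f) :
    False := by
  have key : ∀ x y : E, f x < f y → False := by
    intro x y hxy
    obtain ⟨m, hm1, hm2⟩ := exists_between hxy
    have h1 : m ∈ f '' Set.univ :=
      isPreconnected_univ.intermediate_value (Set.mem_univ x) (Set.mem_univ y) hf.continuousOn
        ⟨hm1.le, hm2.le⟩
    obtain ⟨z, -, rfl⟩ := h1
    have h2 : f z ∈ f '' ({z}ᶜ : Set E) :=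
      (isConnected_compl_singleton_of_one_lt_rank h z).isPreconnected.intermediate_value
        (a := x) (b := y) (by rintro rfl; exact lt_irrefl _ hm1)
        (by rintro rfl; exact lt_irrefl _ hm2) hf.continuousOn ⟨hm1.le, hm2.le⟩
    obtain ⟨w, hw, hwz⟩ := h2
    exact hw (hi hwz)
  have : Nontrivial E := by
    by_contra hn
    rw [not_nontrivial_iff_subsingleton] at hn
    have := rank_subsingleton' ℝ E
    rw [this] at h
    exact absurd h (by simp)
  obtain ⟨x, y, hxy⟩ := exists_pair_ne E
  rcases lt_or_gt_of_ne (fun e => hxy (hi e)) with h' | h'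
  · exact key _ _ h'
  · exact key _ _ h'

theorem not_ball_of_open_seg {N : ℕ} (X O : Set (EuclideanSpace ℝ (Fin N)))
    (a d : EuclideanSpace ℝ (Fin N)) (hO : IsOpen O) (hne : (X ∩ O).Nonempty)
    (hsub : X ∩ O ⊆ segment ℝ a d) : ¬ IsBallSet 2 X := by
  rintro ⟨h⟩
  have hW : IsOpen (h.symm ⁻¹' (Subtype.val ⁻¹' O)) :=
    (hO.preimage continuous_subtype_val).preimage h.symm.continuous
  obtain ⟨P, hP, hPW⟩ := isOpen_induced_iff.1 hW
  obtain ⟨p, hpX, hpO⟩ := hne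
  have hcl : (h ⟨p, hpX⟩ : EuclideanSpace ℝ (Fin 2)) ∈ closure (Metric.ball 0 1) := by
    rw [closure_ball _ one_ne_zero]
    exact (h ⟨p, hpX⟩).2
  have hpP : (h ⟨p, hpX⟩ : EuclideanSpace ℝ (Fin 2)) ∈ P := by
    have : h ⟨p, hpX⟩ ∈ Subtype.val ⁻¹' P := by
      rw [hPW]; simpa using hpO
    exact this
  obtain ⟨q, hqP, hqb⟩ := mem_closure_iff.1 hcl P hP hpP
  obtain ⟨r, hr, hball⟩ := Metric.isOpen_iff.1 (hP.inter Metric.isOpen_ball) q ⟨hqP, hqb⟩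
  let u := OpenPartialHomeomorph.univBall q r
  have hu : ∀ y, u y ∈ Metric.ball q r := by
    intro y
    have := u.map_source (x := y) (by simp [u])
    rwa [OpenPartialHomeomorph.univBall_target q hr] at this
  have huc : Continuous u := OpenPartialHomeomorph.continuous_univBall q r
  have hui : Function.Injective u := by
    intro x y hxy
    exact u.injOn (by simp [u]) (by simp [u]) hxy
  let F : EuclideanSpace ℝ (Fin 2) → Metric.closedBall (0 : EuclideanSpace ℝ (Fin 2)) 1 :=
    fun y => ⟨u y, Metric.ball_subset_closedBall (hball (hu y)).2⟩
  have hFc : Continuous F := huc.subtype_mk _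
  have hseg : ∀ y, (h.symm (F y) : EuclideanSpace ℝ (Fin N)) ∈ segment ℝ a d := by
    intro y
    refine hsub ⟨(h.symm (F y)).2, ?_⟩
    have : F y ∈ Subtype.val ⁻¹' P := (hball (hu y)).1
    rw [hPW] at this
    exact this
  refine no_inj_real (E := EuclideanSpace ℝ (Fin 2)) ?_
    (fun y => dist (h.symm (F y) : EuclideanSpace ℝ (Fin N)) a) ?_ ?_
  · rw [← Module.finrank_eq_rank]; simp
  · exact (continuous_subtype_val.comp (h.symm.continuous.comp hFc)).dist continuous_const
  · intro x y hxy
    have key : (h.symm (F x) : EuclideanSpace ℝ (Fin N)) = h.symm (F y) := by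
      have h1 := hseg x
      have h2 := hseg y
      rw [segment_eq_image'] at h1 h2
      obtain ⟨s, hs, hs'⟩ := h1
      obtain ⟨t, ht, ht'⟩ := h2
      simp only [← hs', ← ht', dist_eq_norm, add_sub_cancel_left, norm_smul, Real.norm_eq_abs,
        abs_of_nonneg hs.1, abs_of_nonneg ht.1] at hxy
      rw [← hs', ← ht']
      rcases mul_eq_mul_right_iff.1 hxy with e | e
      · simp only [e]
      · rw [norm_eq_zero] at e
        simp only [e, smul_zero]
    have h3 : F x = F y := h.symm.injective (Subtype.ext key)
    exact hui (congrArg Subtype.val h3)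

set_option maxHeartbeats 2000000 in
theorem not_ball_aux {N : ℕ}
    (B : Geometry.SimplicialComplex ℝ (EuclideanSpace ℝ (Fin N)))
    (a b c d : EuclideanSpace ℝ (Fin N))
    (hcard : ({a, b, c, d} : Finset (EuclideanSpace ℝ (Fin N))).card = 4)
    (hΔ : ({a, b, c, d} : Finset (EuclideanSpace ℝ (Fin N))) ∈ B.faces)
    (had : ({a, d} : Finset (EuclideanSpace ℝ (Fin N))) ∈ bdry B.faces 3)
    (h1 : ({a, b, d} : Finset (EuclideanSpace ℝ (Fin N))) ∉ bdry B.faces 3)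
    (h2 : ({a, c, d} : Finset (EuclideanSpace ℝ (Fin N))) ∉ bdry B.faces 3) :
    ¬ IsBallSet 2
      (poly {σ | σ ∈ bdry B.faces 3 ∧
        σ ⊆ ({a, b, c, d} : Finset (EuclideanSpace ℝ (Fin N)))}) := by
  have hdc : ∀ σ ∈ bdry B.faces 3, ∀ τ ⊆ σ, τ.Nonempty → τ ∈ bdry B.faces 3 := by
    rintro σ ⟨hσ, θ, hθ, hσθ⟩ τ hτ hne
    exact ⟨B.down_closed hσ hτ hne, θ, hθ, hτ.trans hσθ⟩
  have hab : a ≠ d ∧ a ≠ b ∧ a ≠ c ∧ b ≠ d ∧ c ≠ d := by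
    have key : ∀ x y z : EuclideanSpace ℝ (Fin N),
        ¬ (({a, b, c, d} : Finset (EuclideanSpace ℝ (Fin N))) ⊆ {x, y, z}) := by
      intro x y z hs
      have h3 := Finset.card_le_card hs
      have h4 := Finset.card_le_three (a := x) (b := y) (c := z)
      omega
    refine ⟨fun e => key a b c ?_, fun e => key a c d ?_, fun e => key a b d ?_,
      fun e => key a b c ?_, fun e => key a b c ?_⟩ <;>
    · intro x hx
      simp only [Finset.mem_insert, Finset.mem_singleton] at hx ⊢
      subst e
      tauto
  obtain ⟨hnad, hnab, hnac, hnbd, hncd⟩ := hab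
  have hadB := had.1
  have habc : ({a, b, c} : Finset (EuclideanSpace ℝ (Fin N))) ∈ B.faces :=
    B.down_closed hΔ (by intro x; simp; tauto) (by simp)
  have hbcd : ({b, c, d} : Finset (EuclideanSpace ℝ (Fin N))) ∈ B.faces :=
    B.down_closed hΔ (by intro x; simp; tauto) (by simp)
  have hmid : midpoint ℝ a d ∈
      convexHull ℝ ((({a, d} : Finset (EuclideanSpace ℝ (Fin N)))) : Set _) := by
    rw [Finset.coe_pair, convexHull_pair]
    exact midpoint_mem_segment a d
  refine not_ball_of_open_seg _
    ((convexHull ℝ (({a, b, c} : Finset (EuclideanSpace ℝ (Fin N))) : Set _))ᶜ ∩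
      (convexHull ℝ (({b, c, d} : Finset (EuclideanSpace ℝ (Fin N))) : Set _))ᶜ) a d ?_ ?_ ?_
  · exact ((Finset.finite_toSet _).isClosed_convexHull ℝ).isOpen_compl.inter
      ((Finset.finite_toSet _).isClosed_convexHull ℝ).isOpen_compl
  · refine ⟨midpoint ℝ a d, ?_, ?_, ?_⟩
    · simp only [poly, Set.mem_iUnion]
      exact ⟨{a, d}, ⟨had, by intro x; simp; tauto⟩, hmid⟩
    · intro hm
      have := B.inter_subset_convexHull hadB habc ⟨hmid, hm⟩
      have e : ((({a, d} : Finset (EuclideanSpace ℝ (Fin N)))) : Set (EuclideanSpace ℝ (Fin N))) ∩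
          (({a, b, c} : Finset (EuclideanSpace ℝ (Fin N))) : Set _) = {a} := by
        ext x; simp; grind
      rw [e, convexHull_singleton, Set.mem_singleton_iff, midpoint_eq_left_iff] at this
      exact hnad this
    · intro hm
      have := B.inter_subset_convexHull hadB hbcd ⟨hmid, hm⟩
      have e : ((({a, d} : Finset (EuclideanSpace ℝ (Fin N)))) : Set (EuclideanSpace ℝ (Fin N))) ∩
          (({b, c, d} : Finset (EuclideanSpace ℝ (Fin N))) : Set _) = {d} := by
        ext x; simp; grind
      rw [e, convexHull_singleton, Set.mem_singleton_iff, midpoint_eq_right_iff] at this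
      exact hnad this
  · rintro x ⟨hx, hx1, hx2⟩
    simp only [poly, Set.mem_iUnion] at hx
    obtain ⟨σ, ⟨hσ, hσΔ⟩, hxσ⟩ := hx
    have ha : a ∈ σ := by
      by_contra hn
      refine hx2 (convexHull_mono ?_ hxσ)
      intro y hy
      have := hσΔ hy
      simp at this hy ⊢
      grind
    have hd : d ∈ σ := by
      by_contra hn
      refine hx1 (convexHull_mono ?_ hxσ)
      intro y hy
      have := hσΔ hy
      simp at this hy ⊢
      grind
    have hb : b ∉ σ := fun hb => h1 (hdc σ hσ _ (by
      intro y hy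
      simp only [Finset.mem_insert, Finset.mem_singleton] at hy
      rcases hy with rfl | rfl | rfl <;> assumption) (by simp))
    have hc : c ∉ σ := fun hc => h2 (hdc σ hσ _ (by
      intro y hy
      simp only [Finset.mem_insert, Finset.mem_singleton] at hy
      rcases hy with rfl | rfl | rfl <;> assumption) (by simp))
    rw [← convexHull_pair]
    refine convexHull_mono ?_ hxσ
    intro y hy
    have := hσΔ hy
    simp at this hy ⊢
    grind

set_option maxHeartbeats 2000000 in
/-- Observation 9.3. -/
theorem tetrahedron_not_free {N : ℕ}
    (B : Geometry.SimplicialComplex ℝ (EuclideanSpace ℝ (Fin N)))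
    (hfin : B.faces.Finite)
    (hball : IsBallSet 3 B.space)
    (hpure : PureDim B.faces 3)
    (a b c d : EuclideanSpace ℝ (Fin N))
    (hcard : ({a, b, c, d} : Finset (EuclideanSpace ℝ (Fin N))).card = 4)
    (hΔ : ({a, b, c, d} : Finset (EuclideanSpace ℝ (Fin N))) ∈ B.faces)
    (had : ({a, d} : Finset (EuclideanSpace ℝ (Fin N))) ∈ bdry B.faces 3)
    (hbd : ({b, d} : Finset (EuclideanSpace ℝ (Fin N))) ∈ bdry B.faces 3)
    (hcd : ({c, d} : Finset (EuclideanSpace ℝ (Fin N))) ∈ bdry B.faces 3)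
    (h2 : ∃ t₁ t₂ : Finset (EuclideanSpace ℝ (Fin N)), t₁ ≠ t₂ ∧
      t₁ ∈ ({{a, b, d}, {a, c, d}, {b, c, d}} :
        Set (Finset (EuclideanSpace ℝ (Fin N)))) ∧
      t₂ ∈ ({{a, b, d}, {a, c, d}, {b, c, d}} :
        Set (Finset (EuclideanSpace ℝ (Fin N)))) ∧
      t₁ ∉ bdry B.faces 3 ∧ t₂ ∉ bdry B.faces 3) :
    ¬ IsBallSet 2
      (poly {σ | σ ∈ bdry B.faces 3 ∧
        σ ⊆ ({a, b, c, d} : Finset (EuclideanSpace ℝ (Fin N)))}) := by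
  have p1 : ({a, b, c, d} : Finset (EuclideanSpace ℝ (Fin N))) = {b, a, c, d} := by
    ext x; simp; tauto
  have p2 : ({a, b, c, d} : Finset (EuclideanSpace ℝ (Fin N))) = {c, a, b, d} := by
    ext x; simp; tauto
  have q1 : ({a, b, d} : Finset (EuclideanSpace ℝ (Fin N))) = {b, a, d} := by
    ext x; simp; tauto
  have q2 : ({a, c, d} : Finset (EuclideanSpace ℝ (Fin N))) = {c, a, d} := by
    ext x; simp; tauto
  have q3 : ({b, c, d} : Finset (EuclideanSpace ℝ (Fin N))) = {c, b, d} := by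
    ext x; simp; tauto
  have A := not_ball_aux B a b c d hcard hΔ had
  have A1 := not_ball_aux B b a c d (p1 ▸ hcard) (p1 ▸ hΔ) hbd
  have A2 := not_ball_aux B c a b d (p2 ▸ hcard) (p2 ▸ hΔ) hcd
  rw [← p1, ← q1] at A1
  rw [← p2, ← q2, ← q3] at A2
  obtain ⟨t₁, t₂, hne, ht1, ht2, hn1, hn2⟩ := h2
  simp only [Set.mem_insert_iff, Set.mem_singleton_iff] at ht1 ht2
  rcases ht1 with rfl | rfl | rfl <;> rcases ht2 with rfl | rfl | rfl <;>
    first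
      | exact absurd rfl hne
      | exact A hn1 hn2
      | exact A hn2 hn1
      | exact A1 hn1 hn2
      | exact A1 hn2 hn1
      | exact A2 hn1 hn2
      | exact A2 hn2 hn1

end PaperFormal
end

section
/- Let k ≥ 2 and let C be the conjunction cone on vertices d, w₋, u₁,…,u_k, namely the simplicial complex generated by the k−1 tetrahedra Δ_i := {d,w₋,u_i,u_{i+1}} for i = 1,…,k−1; write ε₀ := {w₋,u₁}, ε_i := {u_i,u_{i+1}} for i = 1,…,k−1, and ε_k := {u_k,w₋}. Let B be a triangulated 3-ball containing C as a subcomplex such that every edge of C containing d belongs to ∂B and none of the triangles ε_i ∪ {d} (i = 0,…,k) belongs to ∂B; assume that for each i ∈ {0,…,k} there is a unique 3-face Δ'_i of B not belonging to C that contains ε_i ∪ {d}. Then in any shelling down of B to a single 3-face, either Δ'_0 is shelled before Δ_1, or all of Δ'_1,…,Δ'_k are shelled before Δ_1 (here 'F is shelled before G' means F appears earlier than G in the shelling sequence, or F appears in the sequence while G is the final remaining 3-face). -/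
/-!
STATEMENT 6 (Lemma 9.2): conjunction cone. In any shelling down of B to a single
3-face, before shelling Δ_1 either Δ'_0 is shelled, or all Δ'_1,…,Δ'_k are.
-/

open scoped Classical

namespace PaperFormal

variable {V : Type*}

/-- `K[θ_1,…,θ_m]` for the list `l = [θ_1,…,θ_m]`. -/
def generatedByL (K : Set (Finset V)) (l : List (Finset V)) : Set (Finset V) :=
  {τ ∈ K | ∃ θ ∈ l, τ ⊆ θ}

/-- The shelling-down condition for the first `k` entries of `l`. -/
def DownSteps (K : Set (Finset V)) (d : ℕ) (l : List (Finset V)) (k : ℕ) : Prop :=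
  ∀ i, i < k →
    PureDim (generatedByL K [l.getD i ∅] ∩ generatedByL K (l.drop (i + 1))) (d - 1)

/-- The first `k` entries of `l` (which enumerates all facets of `K`) form a
shelling down of `K`. -/
def IsShellingDown (K : Set (Finset V)) (d : ℕ) (l : List (Finset V)) (k : ℕ) : Prop :=
  l.Nodup ∧ (∀ σ, σ ∈ l ↔ IsFacet K σ) ∧ k + 1 ≤ l.length ∧ DownSteps K d l k

/-- `F` is shelled before `G` in the (full) shelling order `l`: `F` appears
strictly earlier than `G` in `l` (if `G` is the final remaining facet it sits at
the last position of `l`). -/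
def Before (l : List (Finset V)) (F G : Finset V) : Prop :=
  ∃ i j : ℕ, i < j ∧ j < l.length ∧ l.getD i ∅ = F ∧ l.getD j ∅ = G

abbrev E3 := EuclideanSpace ℝ (Fin 3)

noncomputable def ent (A : E3 →L[ℝ] E3) (i j : Fin 3) : ℝ := A (EuclideanSpace.basisFun (Fin 3) ℝ j) i

lemma continuous_ent (i j : Fin 3) : Continuous (fun A : E3 →L[ℝ] E3 => ent A i j) := by
  unfold ent
  fun_prop

lemma det_ent (A : E3 →L[ℝ] E3) : A.det = Matrix.det (Matrix.of (ent A)) := by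
  rw [ContinuousLinearMap.det, ← LinearMap.det_toMatrix (EuclideanSpace.basisFun (Fin 3) ℝ).toBasis]
  congr 1
  ext i j
  simp [LinearMap.toMatrix_apply, ent]

lemma ent_one_add (A : E3 →L[ℝ] E3) (t : ℝ) (i j : Fin 3) :
    ent (1 + t • A) i j = (if i = j then 1 else 0) + t * ent A i j := by
  simp [ent, EuclideanSpace.basisFun_apply]

lemma det_expand : ∃ c1 c2 c3 : (E3 →L[ℝ] E3) → ℝ, Continuous c1 ∧ Continuous c2 ∧ Continuous c3 ∧
    ∀ (A : E3 →L[ℝ] E3) (t : ℝ), (1 + t • A).det = 1 + t * c1 A + t^2 * c2 A + t^3 * c3 A := by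
  have h := continuous_ent
  refine ⟨fun A => ent A 0 0 + ent A 1 1 + ent A 2 2,
    fun A => ent A 0 0 * ent A 1 1 - ent A 0 1 * ent A 1 0 + ent A 0 0 * ent A 2 2
      - ent A 0 2 * ent A 2 0 + ent A 1 1 * ent A 2 2 - ent A 1 2 * ent A 2 1,
    fun A => Matrix.det (Matrix.of (ent A)), ?_, ?_, ?_, ?_⟩
  · fun_prop
  · fun_prop
  · simp only [Matrix.det_fin_three, Matrix.of_apply]; fun_prop
  · intro A t
    rw [det_ent]
    simp only [Matrix.det_fin_three, Matrix.of_apply, ent_one_add]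
    simp
    ring

lemma det_pos_of_norm_lt (A : E3 →L[ℝ] E3) (hA : ‖A‖ < 1) : 0 < (1 + A).det := by
  have hne : ∀ s ∈ Set.Icc (0:ℝ) 1, (1 + s • A).det ≠ 0 := by
    intro s hs
    have h1 : ‖-(s • A)‖ < 1 := by
      rw [norm_neg, norm_smul, Real.norm_eq_abs, abs_of_nonneg hs.1]
      nlinarith [norm_nonneg A, hs.2]
    have hu : IsUnit (1 + s • A) := by
      have := isUnit_one_sub_of_norm_lt_one h1
      simpa using this
    obtain ⟨v, hv⟩ := hu
    intro hz
    have h2 : ((v : E3 →L[ℝ] E3) * ((v⁻¹ : (E3 →L[ℝ] E3)ˣ) : E3 →L[ℝ] E3)).det = 1 := by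
      rw [v.mul_inv]; simp [ContinuousLinearMap.det]
    have h3 : ((v : E3 →L[ℝ] E3) * ((v⁻¹ : (E3 →L[ℝ] E3)ˣ) : E3 →L[ℝ] E3)).det =
        (v : E3 →L[ℝ] E3).det * ((v⁻¹ : (E3 →L[ℝ] E3)ˣ) : E3 →L[ℝ] E3).det := by
      simp only [ContinuousLinearMap.det]
      exact LinearMap.det_comp _ _
    rw [h3, hv, hz, zero_mul] at h2
    exact zero_ne_one h2
  by_contra hcon
  push Not at hcon
  have hc : ContinuousOn (fun s : ℝ => (1 + s • A).det) (Set.Icc 0 1) := by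
    obtain ⟨c1, c2, c3, -, -, -, h⟩ := det_expand
    simp only [h]
    fun_prop
  have := intermediate_value_Icc' (zero_le_one' ℝ) hc
  have h0 : (0:ℝ) ∈ Set.Icc ((1 + (1:ℝ) • A).det) ((1 + (0:ℝ) • A).det) := by
    constructor
    · simpa using hcon
    · simp [ContinuousLinearMap.det]
  obtain ⟨s, hs, hs'⟩ := this h0
  exact hne s hs hs'

lemma poly_const (a b c e t0 v : ℝ) (ht0 : 0 < t0)
    (h : ∀ t, 0 < t → t < t0 → a + t * b + t^2 * c + t^3 * e = v) : a + b + c + e = v := by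
  open Polynomial in
  let p : Polynomial ℝ := C a + X * C b + X^2 * C c + X^3 * C e
  have hp : p = Polynomial.C v := by
    apply Polynomial.eq_of_infinite_eval_eq
    apply (Set.Ioo_infinite ht0).mono
    intro t ht
    have := h t ht.1 ht.2
    simp [p]
    linarith
  have := congrArg (Polynomial.eval 1) hp
  simpa [p] using this

open MeasureTheory Metric in
lemma no_retr (R : ℝ) (hR : 0 < R) (r : E3 → E3) (hr : ContDiff ℝ 1 r)
    (hn : ∀ x, ‖r x‖ = R) (hid : ∀ x, ‖x‖ = R → r x = x) : False := by
  obtain ⟨c1, c2, c3, hc1, hc2, hc3, hdet⟩ := det_expand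
  let U := ball (0 : E3) R
  let h : E3 → E3 := fun x => r x - x
  have hh : ContDiff ℝ 1 h := hr.sub contDiff_id
  have hhd : ∀ x, HasFDerivAt h (fderiv ℝ h x) x := fun x =>
    (hh.differentiable one_ne_zero x).hasFDerivAt
  have hcf : Continuous (fderiv ℝ h) := hh.continuous_fderiv one_ne_zero
  -- Lipschitz
  obtain ⟨K, hK⟩ : ∃ K : ℝ, ∀ x ∈ closedBall (0:E3) R, ‖fderiv ℝ h x‖ ≤ K :=
    (isCompact_closedBall (0:E3) R).exists_bound_of_continuousOn hcf.continuousOn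
  have hK0 : 0 ≤ K := (norm_nonneg _).trans (hK 0 (by simp [hR.le]))
  have hlip : ∀ x ∈ closedBall (0:E3) R, ∀ y ∈ closedBall (0:E3) R, ‖h x - h y‖ ≤ K * ‖x - y‖ := by
    intro x hx y hy
    exact (convex_closedBall (0:E3) R).norm_image_sub_le_of_norm_fderiv_le
      (fun x _ => (hhd x).differentiableAt) hK hy hx
  let t0 : ℝ := 1 / (K + 1)
  have ht0 : 0 < t0 := by positivity
  have ht01 : t0 ≤ 1 := by rw [div_le_one (by positivity)]; linarith
  have htK : ∀ t, 0 < t → t < t0 → t * K < 1 := by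
    intro t ht ht'
    have : t * (K + 1) < 1 := by
      rwa [lt_div_iff₀ (by positivity)] at ht'
    nlinarith
  let g : ℝ → E3 → E3 := fun t x => x + t • h x
  have hgd : ∀ t x, HasFDerivAt (g t) (1 + t • fderiv ℝ h x) x := fun t x =>
    (hasFDerivAt_id x).add ((hhd x).const_smul t)
  have happ : ∀ t (ht : 0 < t), t < t0 → ApproximatesLinearOn (g t)
      ((ContinuousLinearEquiv.refl ℝ E3 : E3 ≃L[ℝ] E3) : E3 →L[ℝ] E3)
      (closedBall 0 R) ⟨t * K, by positivity⟩ := by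
    intro t ht ht' x hx y hy
    have : g t x - g t y - (x - y) = t • (h x - h y) := by
      simp only [g, smul_sub]; abel
    change ‖g t x - g t y - (x - y)‖ ≤ (t * K) * ‖x - y‖
    rw [this, norm_smul, Real.norm_eq_abs, abs_of_pos ht, mul_assoc]
    exact mul_le_mul_of_nonneg_left (hlip x hx y hy) ht.le
  have hinv : ∀ t (ht : 0 < t), t < t0 → (⟨t * K, by positivity⟩ : NNReal) <
      ‖((ContinuousLinearEquiv.refl ℝ E3).symm : E3 →L[ℝ] E3)‖₊⁻¹ := by
    intro t ht ht'
    have : ‖((ContinuousLinearEquiv.refl ℝ E3).symm : E3 →L[ℝ] E3)‖₊ = 1 := by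
      simp
    rw [this, inv_one]
    exact_mod_cast htK t ht ht'
  have hinj : ∀ t, 0 < t → t < t0 → Set.InjOn (g t) U := by
    intro t ht ht'
    exact ((happ t ht ht').injOn (Or.inr (hinv t ht ht'))).mono ball_subset_closedBall
  have hopen : ∀ t, 0 < t → t < t0 → IsOpen (g t '' U) := by
    intro t ht ht'
    refine ((happ t ht ht').mono_set ball_subset_closedBall).open_image
      (ContinuousLinearEquiv.refl ℝ E3).toNonlinearRightInverse isOpen_ball (Or.inr ?_)
    exact hinv t ht ht'
  have hmaps : ∀ t, 0 < t → t < t0 → Set.MapsTo (g t) U U := by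
    intro t ht ht' x hx
    have hx' : ‖x‖ < R := by simpa [U] using hx
    have e : g t x = (1 - t) • x + t • r x := by
      simp only [g, h, smul_sub, sub_smul, one_smul]; abel
    have : ‖g t x‖ < R := by
      rw [e]
      calc _ ≤ ‖(1-t) • x‖ + ‖t • r x‖ := norm_add_le _ _
        _ = (1 - t) * ‖x‖ + t * R := by
          rw [norm_smul, norm_smul, hn, Real.norm_eq_abs, Real.norm_eq_abs, abs_of_pos ht,
            abs_of_nonneg (by linarith)]
        _ < R := by nlinarith
    simpa [U] using this
  have hgc : ∀ t, Continuous (g t) := fun t => continuous_id.add (hh.continuous.const_smul t)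
  have himg : ∀ t, 0 < t → t < t0 → g t '' U = U := by
    intro t ht ht'
    apply (hmaps t ht ht').image_subset.antisymm
    have hpre : IsPreconnected U := (convex_ball (0:E3) R).isPreconnected
    have hcl : IsClosed (g t '' closedBall 0 R) :=
      ((isCompact_closedBall (0:E3) R).image (hgc t)).isClosed
    have hbd : ∀ x ∈ closedBall (0:E3) R, g t x ∈ U → g t x ∈ g t '' U := by
      intro x hx hgx
      refine ⟨x, ?_, rfl⟩
      by_contra hxU
      have hxR : ‖x‖ = R := by
        apply le_antisymm (by simpa using hx)
        simpa [U] using hxU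
      have : g t x = x := by simp [g, h, hid x hxR]
      rw [this] at hgx
      exact hxU hgx
    refine hpre.subset_left_of_subset_union (hopen t ht ht') hcl.isOpen_compl ?_ ?_ ?_
    · rw [Set.disjoint_compl_right_iff_subset]
      exact Set.image_mono ball_subset_closedBall
    · intro y hy
      by_cases hy2 : y ∈ g t '' closedBall 0 R
      · left
        obtain ⟨x, hx, rfl⟩ := hy2
        exact hbd x hx hy
      · exact Or.inr hy2
    · have h0 : (0:E3) ∈ U := by simp [U, hR]
      exact ⟨g t 0, hmaps t ht ht' h0, ⟨0, h0, rfl⟩⟩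
  have hint : ∀ c : (E3 →L[ℝ] E3) → ℝ, Continuous c →
      IntegrableOn (fun x => c (fderiv ℝ h x)) U volume := by
    intro c hc
    exact ((hc.comp hcf).continuousOn.integrableOn_compact (isCompact_closedBall (0:E3) R)).mono_set
      ball_subset_closedBall
  have hI : ∀ t : ℝ, ∫ x in U, (1 + t • fderiv ℝ h x).det =
      (∫ x in U, (1:ℝ)) + t * (∫ x in U, c1 (fderiv ℝ h x)) + t^2 * (∫ x in U, c2 (fderiv ℝ h x))
       + t^3 * (∫ x in U, c3 (fderiv ℝ h x)) := by
    intro t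
    have i0 := hint (fun _ => 1) continuous_const
    have i1 := (hint _ hc1).const_mul t
    have i2 := (hint _ hc2).const_mul (t^2)
    have i3 := (hint _ hc3).const_mul (t^3)
    simp only [hdet]
    rw [integral_add (by exact (i0.add i1).add i2) i3, integral_add (by exact i0.add i1) i2, integral_add i0 i1,
      integral_const_mul, integral_const_mul, integral_const_mul]
  have hsmall : ∀ t, 0 < t → t < t0 →
      ∫ x in U, (1 + t • fderiv ℝ h x).det = ∫ x in U, (1:ℝ) := by
    intro t ht ht'
    have := integral_image_eq_integral_abs_det_fderiv_smul volume (s := U) (f := g t)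
      (f' := fun x => 1 + t • fderiv ℝ h x) measurableSet_ball
      (fun x _ => (hgd t x).hasFDerivWithinAt) (hinj t ht ht') (fun _ => (1:ℝ))
    rw [himg t ht ht'] at this
    rw [this]
    refine setIntegral_congr_fun measurableSet_ball ?_
    intro x hx
    have : 0 < (1 + t • fderiv ℝ h x).det := by
      apply det_pos_of_norm_lt
      rw [norm_smul, Real.norm_eq_abs, abs_of_pos ht]
      exact (mul_le_mul_of_nonneg_left (hK x (ball_subset_closedBall hx)) ht.le).trans_lt
        (htK t ht ht')
    simp [abs_of_pos this]
  have hone := poly_const _ _ _ _ t0 _ ht0 (fun t ht ht' => (hI t).symm.trans (hsmall t ht ht'))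
  have h1 := hI 1
  simp only [one_pow, one_mul, hone] at h1
  have hz : ∀ x, (1 + (1:ℝ) • fderiv ℝ h x).det = 0 := by
    intro x
    have hd := hgd 1 x
    have hg1 : g 1 = r := by funext y; simp [g, h]
    rw [hg1] at hd
    by_contra hne
    have hsq : HasFDerivAt (fun y => inner ℝ (r y) (r y)) _ x := hd.inner ℝ hd
    have hconst : (fun y => inner ℝ (r y) (r y)) = fun _ => R^2 := by
      funext y; rw [real_inner_self_eq_norm_sq, hn]
    rw [hconst] at hsq
    have hz := hsq.unique (hasFDerivAt_const _ x)
    set A := 1 + (1:ℝ) • fderiv ℝ h x with hA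
    have hu : IsUnit (A : E3 →ₗ[ℝ] E3).det := isUnit_iff_ne_zero.2 hne
    let e := LinearMap.equivOfDetNeZero (A : E3 →ₗ[ℝ] E3) hne
    have hs : A (e.symm (r x)) = r x := e.apply_symm_apply (r x)
    have := congrArg (fun L => L (e.symm (r x))) hz
    simp [fderivInnerCLM_apply, hs, hn] at this
    exact hR.ne' this
  simp only [hz] at h1
  have hvol : 0 < (volume U).toReal :=
    ENNReal.toReal_pos (measure_ball_pos volume (0:E3) hR).ne' measure_ball_lt_top.ne
  simp at h1
  rw [Measure.real] at h1
  exact hvol.ne h1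


lemma stab (H : E3 → E3) (hH : ContinuousOn H (Metric.closedBall 0 1))
    (hd : ∀ x ∈ Metric.closedBall (0:E3) 1, ‖H x - x‖ ≤ 1/2) :
    ∃ x ∈ Metric.closedBall (0:E3) 1, H x = 0 := by
  by_contra hcon
  push Not at hcon
  let p : E3 → E3 := fun x => (max 1 ‖x‖)⁻¹ • x
  have hpc : Continuous p := by
    have hm : Continuous (fun x : E3 => max 1 ‖x‖) := by fun_prop
    refine Continuous.smul (Continuous.inv₀ hm ?_) continuous_id
    intro x
    have : (1:ℝ) ≤ max 1 ‖x‖ := le_max_left _ _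
    positivity
  have hpm : ∀ x, p x ∈ Metric.closedBall (0:E3) 1 := by
    intro x
    have h1 : (1:ℝ) ≤ max 1 ‖x‖ := le_max_left _ _
    have h2 : ‖x‖ ≤ max 1 ‖x‖ := le_max_right _ _
    simp only [p, mem_closedBall_zero_iff, norm_smul, norm_inv, Real.norm_eq_abs]
    rw [abs_of_pos (by positivity), inv_mul_le_iff₀ (by positivity)]
    linarith
  have hp1 : ∀ x, ‖x‖ ≤ 1 → p x = x := by
    intro x hx
    simp [p, max_eq_left hx]
  let H2 : E3 → E3 := fun x => H (p x) + (x - p x)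
  have hH2 : Continuous H2 :=
    (hH.comp_continuous hpc hpm).add (continuous_id.sub hpc)
  have hH2d : ∀ x, ‖H2 x - x‖ ≤ 1/2 := by
    intro x
    have : H2 x - x = H (p x) - p x := by simp only [H2]; abel
    rw [this]; exact hd _ (hpm x)
  have hH2n : ∀ x ∈ Metric.closedBall (0:E3) 1, H2 x ≠ 0 := by
    intro x hx
    have hx' : ‖x‖ ≤ 1 := by simpa using hx
    simp only [H2, hp1 x hx', sub_self, add_zero]
    exact hcon x hx
  obtain ⟨x0, hx0, hmin⟩ := (isCompact_closedBall (0:E3) 1).exists_isMinOn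
    ⟨0, by simp⟩ hH2.norm.continuousOn
  have hη : 0 < ‖H2 x0‖ := norm_pos_iff.2 (hH2n x0 hx0)
  obtain ⟨G, hG, hGd, -⟩ := hH2.exists_contDiff_approx 1 (ε := fun _ => min ‖H2 x0‖ (1/2))
    continuous_const (fun _ => lt_min hη (by norm_num))
  have hGx : ∀ x, ‖G x - x‖ < 1 := by
    intro x
    have h1 := (hGd x).trans_le (min_le_right _ _)
    rw [dist_eq_norm] at h1
    have := norm_add_le (G x - H2 x) (H2 x - x)
    simp only [sub_add_sub_cancel] at this
    linarith [hH2d x]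
  have hGn : ∀ x, ‖x‖ ≤ 1 → G x ≠ 0 := by
    intro x hx h0
    have h1 := (hGd x).trans_le (min_le_left _ _)
    rw [h0, dist_zero_left] at h1
    have := hmin (a := x) (by simpa using hx)
    simp only [Set.mem_ofPred_eq] at this
    linarith
  let χ : ContDiffBump (0:E3) := ⟨1, 2, by norm_num, by norm_num⟩
  let g : E3 → E3 := fun x => x + χ x • (G x - x)
  have hg : ContDiff ℝ 1 g :=
    contDiff_id.add (χ.contDiff.smul (ContDiff.sub (by exact_mod_cast hG) contDiff_id))
  have hg0 : ∀ x, g x ≠ 0 := by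
    intro x h0
    by_cases hx : ‖x‖ ≤ 1
    · have : χ x = 1 := χ.one_of_mem_closedBall (by simpa [χ] using hx)
      simp only [g, this, one_smul, add_sub_cancel] at h0
      exact hGn x hx h0
    · have h1 : ‖χ x • (G x - x)‖ ≤ 1 := by
        rw [norm_smul, Real.norm_eq_abs, abs_of_nonneg χ.nonneg]
        nlinarith [χ.nonneg (x := x), χ.le_one (x := x), hGx x, norm_nonneg (G x - x)]
      have h2 : x = - (χ x • (G x - x)) := eq_neg_of_add_eq_zero_left h0
      have h3 := congrArg norm h2
      rw [norm_neg] at h3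
      linarith
  have hgid : ∀ x, ‖x‖ = 2 → g x = x := by
    intro x hx
    have : χ x = 0 := χ.zero_of_le_dist (by simp [χ, hx])
    simp [g, this]
  refine no_retr 2 (by norm_num) (fun x => (2 * ‖g x‖⁻¹) • g x) ?_ ?_ ?_
  · exact (contDiff_const.mul ((hg.norm ℝ hg0).inv (fun x => norm_ne_zero_iff.2 (hg0 x)))).smul hg
  · intro x
    have : ‖g x‖ ≠ 0 := norm_ne_zero_iff.2 (hg0 x)
    simp [norm_smul, this]
  · intro x hx
    simp [hgid x hx, hx]

open MeasureTheory Metric in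
lemma inv_domain (f : E3 → E3) (hf : ContinuousOn f (closedBall 0 1))
    (hinj : Set.InjOn f (closedBall 0 1)) : f 0 ∈ interior (f '' closedBall 0 1) := by
  have hTE : TietzeExtension.{0, 0} E3 := TietzeExtension.of_tvs ℝ
  have h0B : (0:E3) ∈ closedBall (0:E3) 1 := by simp
  have hBc : IsCompact (closedBall (0:E3) 1) := isCompact_closedBall _ _
  have : CompactSpace (closedBall (0:E3) 1) := isCompact_iff_compactSpace.1 hBc
  have hemb : Topology.IsClosedEmbedding (fun x : closedBall (0:E3) 1 => f x) := by
    apply Continuous.isClosedEmbedding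
    · exact continuousOn_iff_continuous_domRestrict.1 hf
    · exact Set.injOn_iff_injective.1 hinj
  obtain ⟨G, hGe⟩ := ContinuousMap.exists_extension' hemb
    (⟨Subtype.val, continuous_subtype_val⟩ : C(closedBall (0:E3) 1, E3))
  have hG : ∀ x ∈ closedBall (0:E3) 1, G (f x) = x := fun x hx => congrFun hGe ⟨x, hx⟩
  have hGc : Continuous G := G.continuous
  by_contra hint
  obtain ⟨δ, hδ, hGδ⟩ : ∃ δ > 0, ∀ y, ‖y - f 0‖ < 3 * δ → ‖G y‖ < 1/10 := by
    have h1 : ContinuousAt G (f 0) := hGc.continuousAt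
    rw [Metric.continuousAt_iff] at h1
    obtain ⟨δ, hδ, h⟩ := h1 (1/10) (by norm_num)
    refine ⟨δ/3, by positivity, fun y hy => ?_⟩
    have := h (x := y) (by rw [dist_eq_norm]; linarith)
    rwa [hG 0 h0B, dist_zero_right] at this
  obtain ⟨c, hcd, hc⟩ : ∃ c, ‖c - f 0‖ < δ ∧ c ∉ f '' closedBall 0 1 := by
    by_contra hno
    push Not at hno
    apply hint
    rw [mem_interior_iff_mem_nhds, Metric.mem_nhds_iff]
    exact ⟨δ, hδ, fun y hy => hno y (by simpa [dist_eq_norm] using hy)⟩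
  have hfc : IsCompact (f '' closedBall 0 1) := hBc.image_of_continuousOn hf
  obtain ⟨η, hη, hGη⟩ : ∃ η > 0, ∀ y ∈ f '' closedBall 0 1, δ ≤ ‖y - c‖ → η ≤ ‖G y‖ := by
    let S := f '' closedBall 0 1 ∩ {y | δ ≤ ‖y - c‖}
    have hS : IsCompact S := hfc.inter_right (isClosed_le continuous_const (by fun_prop))
    by_cases hne : S.Nonempty
    · obtain ⟨y0, hy0, hmin⟩ := hS.exists_isMinOn hne hGc.norm.continuousOn
      refine ⟨‖G y0‖, ?_, fun y hy hy' => hmin ⟨hy, hy'⟩⟩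
      obtain ⟨⟨x, hx, rfl⟩, hy2⟩ := hy0
      rw [hG x hx]
      refine norm_pos_iff.2 ?_
      rintro rfl
      simp only [Set.mem_ofPred_eq] at hy2
      rw [norm_sub_rev] at hy2
      linarith
    · exact ⟨1, one_pos, fun y hy hy' => absurd ⟨y, hy, hy'⟩ hne⟩
  let κ := min η (1/10) / 2
  have hκ : 0 < κ := by
    have : 0 < min η (1/10) := lt_min hη (by norm_num)
    positivity
  have hκη : 2 * κ ≤ η := by
    have := min_le_left η (1/10); simp only [κ]; linarith
  have hκ1 : 2 * κ ≤ 1/10 := by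
    have := min_le_right η (1/10); simp only [κ]; linarith
  obtain ⟨P, hP, hPd, -⟩ := hGc.exists_contDiff_approx 1 (ε := fun _ => κ)
    continuous_const (fun _ => hκ)
  have hnull : volume (P '' sphere c δ) = 0 :=
    addHaar_image_eq_zero_of_differentiableOn_of_addHaar_eq_zero volume
      (hP.differentiable one_ne_zero).differentiableOn (Measure.addHaar_sphere volume c δ)
  obtain ⟨v, hv, hvP⟩ : ∃ v ∈ ball (0:E3) κ, v ∉ P '' sphere c δ := by
    by_contra hno
    push Not at hno
    have := measure_mono_null (μ := volume) (s := ball (0:E3) κ) hno hnull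
    exact (measure_ball_pos volume (0:E3) hκ).ne' this
  have hv' : ‖v‖ < κ := by simpa using hv
  have hPG : ∀ y, ‖P y - v - G y‖ < 2 * κ := by
    intro y
    have h1 := hPd y
    rw [dist_eq_norm] at h1
    have h2 := norm_sub_le (P y - G y) v
    rw [show P y - v - G y = P y - G y - v by abel]
    linarith
  let Φ : E3 → E3 := fun y => c + (max (δ / ‖y - c‖) 1) • (y - c)
  have hΦ1 : ∀ y, δ ≤ ‖y - c‖ → Φ y = y := by
    intro y hy
    have : δ / ‖y - c‖ ≤ 1 := by rw [div_le_one (by linarith)]; exact hy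
    simp [Φ, max_eq_right this]
  have hΦ2 : ∀ y, y ≠ c → ‖y - c‖ < δ → Φ y ∈ sphere c δ := by
    intro y hyc hy
    have h0 : 0 < ‖y - c‖ := norm_pos_iff.2 (sub_ne_zero.2 hyc)
    have : 1 ≤ δ / ‖y - c‖ := by rw [le_div_iff₀ h0]; linarith
    simp only [Φ, max_eq_left this, mem_sphere_iff_norm, add_sub_cancel_left, norm_smul,
      Real.norm_eq_abs]
    rw [abs_of_pos (by positivity)]
    field_simp
  have hΦc : ContinuousOn Φ {c}ᶜ := by
    have hid : ContinuousOn (fun y : E3 => y - c) {c}ᶜ := by fun_prop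
    have hq : ContinuousOn (fun y : E3 => δ / ‖y - c‖) {c}ᶜ := by
      refine continuousOn_const.div hid.norm ?_
      intro y hy
      exact norm_ne_zero_iff.2 (sub_ne_zero.2 hy)
    have hm : ContinuousOn (fun y : E3 => max (δ / ‖y - c‖) 1) {c}ᶜ := hq.sup continuousOn_const
    exact continuousOn_const.add (hm.smul hid)
  have hfx : ∀ x ∈ closedBall (0:E3) 1, f x ≠ c := fun x hx h => hc ⟨x, hx, h⟩
  obtain ⟨x, hx, hx0⟩ := stab (fun x => P (Φ (f x)) - v) (by
      refine ContinuousOn.sub ?_ continuousOn_const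
      exact hP.continuous.comp_continuousOn (hΦc.comp hf (fun x hx => hfx x hx))) (by
      intro x hx
      have hGx := hG x hx
      by_cases hy : δ ≤ ‖f x - c‖
      · rw [hΦ1 _ hy]
        have := hPG (f x)
        rw [hGx] at this
        linarith
      · push Not at hy
        have hs := hΦ2 _ (hfx x hx) hy
        rw [mem_sphere_iff_norm] at hs
        have h1 : ‖Φ (f x) - f 0‖ < 3 * δ := by
          have := norm_add_le (Φ (f x) - c) (c - f 0)
          simp only [sub_add_sub_cancel] at this
          linarith
        have h2 : ‖f x - f 0‖ < 3 * δ := by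
          have := norm_add_le (f x - c) (c - f 0)
          simp only [sub_add_sub_cancel] at this
          linarith
        have h3 := hGδ _ h1
        have h4 := hGδ _ h2
        rw [hGx] at h4
        have h5 := hPG (Φ (f x))
        have h6 := norm_add_le (P (Φ (f x)) - v - G (Φ (f x))) (G (Φ (f x)) - x)
        simp only [sub_add_sub_cancel] at h6
        have h7 := norm_sub_le (G (Φ (f x))) x
        linarith)
  by_cases hy : δ ≤ ‖f x - c‖
  · rw [hΦ1 _ hy] at hx0
    have h1 := hPG (f x)
    rw [hx0, zero_sub, norm_neg] at h1
    have := hGη (f x) ⟨x, hx, rfl⟩ hy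
    linarith
  · push Not at hy
    exact hvP ⟨_, hΦ2 _ (hfx x hx) hy, sub_eq_zero.1 hx0⟩


section T1
variable {W : Type*} [NormedAddCommGroup W] [NormedSpace ℝ W]

def cmb (a b c p : W) (x y z : ℝ) : W := a + x • (b - a) + y • (c - a) + z • (p - a)

lemma cmb_mem {a b c p : W} {x y z : ℝ} (hx : 0 ≤ x) (hy : 0 ≤ y) (hz : 0 ≤ z)
    (h : x + y + z ≤ 1) : cmb a b c p x y z ∈ convexHull ℝ (({a, b, c, p} : Finset W) : Set W) := by
  have hm : ∀ i : Fin 4, (![a, b, c, p] i) ∈ convexHull ℝ (({a, b, c, p} : Finset W) : Set W) := by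
    intro i
    apply subset_convexHull
    fin_cases i <;> simp
  have := (convex_convexHull ℝ (({a, b, c, p} : Finset W) : Set W)).sum_mem
    (t := Finset.univ) (w := ![1 - x - y - z, x, y, z]) (z := ![a, b, c, p])
    (by intro i _; fin_cases i <;> simp <;> linarith)
    (by simp [Fin.sum_univ_four]; ring) (fun i _ => hm i)
  convert this using 1
  simp [Fin.sum_univ_four, cmb]
  module

lemma hull3 {a b c y : W} (h : y ∈ convexHull ℝ ({a, b, c} : Set W)) :
    ∃ s t : ℝ, y = a + s • (b - a) + t • (c - a) := by
  have : convexHull ℝ ({a, b, c} : Set W) ⊆ {y | ∃ s t : ℝ, y = a + s • (b - a) + t • (c - a)} := by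
    apply convexHull_min
    · rintro z (rfl | rfl | rfl)
      · exact ⟨0, 0, by simp⟩
      · exact ⟨1, 0, by simp⟩
      · exact ⟨0, 1, by simp⟩
    · rintro _ ⟨s, t, rfl⟩ _ ⟨s', t', rfl⟩ α β _ _ hαβ
      refine ⟨α * s + β * s', α * t + β * t', ?_⟩
      have : β = 1 - α := by linarith
      subst this
      module
  exact this h

lemma linind {a b c p : W} (h : AffineIndependent ℝ ((↑) : ({a, b, c, p} : Finset W) → W))
    (hab : a ≠ b) (hac : a ≠ c) (hbc : b ≠ c) (hap : a ≠ p) (hbp : b ≠ p) (hcp : c ≠ p)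
    {x y z : ℝ} (h0 : x • (b - a) + y • (c - a) + z • (p - a) = 0) : x = 0 ∧ y = 0 ∧ z = 0 := by
  let e : Fin 4 → ({a, b, c, p} : Finset W) :=
    ![⟨a, by simp⟩, ⟨b, by simp⟩, ⟨c, by simp⟩, ⟨p, by simp⟩]
  have he : Function.Injective e := by
    intro i j hij
    have := congrArg Subtype.val hij
    fin_cases i <;> fin_cases j <;> simp_all [e]
  have h4 := h.comp_embedding ⟨e, he⟩
  rw [affineIndependent_iff] at h4
  have := h4 Finset.univ ![-(x + y + z), x, y, z] (by simp [Fin.sum_univ_four]; ring) (by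
    simp [Fin.sum_univ_four, e]
    rw [← h0]; module)
  exact ⟨this 1 (by simp), this 2 (by simp), this 3 (by simp)⟩

lemma cmb_inj {a b c p : W} (h : AffineIndependent ℝ ((↑) : ({a, b, c, p} : Finset W) → W))
    (hab : a ≠ b) (hac : a ≠ c) (hbc : b ≠ c) (hap : a ≠ p) (hbp : b ≠ p) (hcp : c ≠ p)
    {x y z x' y' z' : ℝ} (h0 : cmb a b c p x y z = cmb a b c p x' y' z') :
    x = x' ∧ y = y' ∧ z = z' := by
  have := linind h hab hac hbc hap hbp hcp (x := x - x') (y := y - y') (z := z - z') (by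
    rw [← sub_eq_zero] at h0
    rw [← h0]; simp only [cmb]; module)
  refine ⟨by linarith [this.1], by linarith [this.2.1], by linarith [this.2.2]⟩

lemma cmb_ne (B : Geometry.SimplicialComplex ℝ W) {a b c p q : W}
    (hp : ({a, b, c, p} : Finset W) ∈ B.faces) (hq : ({a, b, c, q} : Finset W) ∈ B.faces)
    (hab : a ≠ b) (hac : a ≠ c) (hbc : b ≠ c) (hap : a ≠ p) (hbp : b ≠ p) (hcp : c ≠ p)
    (hpq : p ≠ q) {x y z : ℝ} (hx : 0 ≤ x) (hy : 0 ≤ y) (hz : 0 < z)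
    (h : x + y + z ≤ 1) {x' y' z' : ℝ} (hx' : 0 ≤ x') (hy' : 0 ≤ y') (hz' : 0 ≤ z')
    (h' : x' + y' + z' ≤ 1) : cmb a b c p x y z ≠ cmb a b c q x' y' z' := by
  intro heq
  have h1 := cmb_mem (a := a) (b := b) (c := c) (p := p) hx hy hz.le h
  have h2 := cmb_mem (a := a) (b := b) (c := c) (p := q) hx' hy' hz' h'
  rw [← heq] at h2
  have h3 := B.inter_subset_convexHull hp hq ⟨h1, h2⟩
  have h4 : ((({a, b, c, p} : Finset W) : Set W) ∩ (({a, b, c, q} : Finset W) : Set W)) ⊆ {a, b, c} := by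
    rintro v ⟨hv, hv'⟩
    simp only [Finset.coe_insert, Finset.coe_singleton, Set.mem_insert_iff,
      Set.mem_singleton_iff] at hv hv' ⊢
    grind
  obtain ⟨s, t, hst⟩ := hull3 (convexHull_mono h4 h3)
  have := cmb_inj (B.indep hp) hab hac hbc hap hbp hcp (x := x) (y := y) (z := z)
    (x' := s) (y' := t) (z' := 0) (by rw [hst]; simp [cmb])
  linarith [this.2.2]

lemma phi_cont (a b c p q : W) : Continuous (fun v : E3 =>
    a + (1/3 + v 0 / 10) • (b - a) + (1/3 + v 1 / 10) • (c - a) + (max (v 2) 0 / 10) • (p - a)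
      + (max (-v 2) 0 / 10) • (q - a)) := by
  have h : ∀ i : Fin 3, Continuous (fun v : E3 => v i) := fun i => by fun_prop
  have h0 : Continuous (fun v : E3 => 1/3 + v 0 / 10) := continuous_const.add ((h 0).div_const _)
  have h1 : Continuous (fun v : E3 => 1/3 + v 1 / 10) := continuous_const.add ((h 1).div_const _)
  have h2 : Continuous (fun v : E3 => max (v 2) 0 / 10) := ((h 2).max continuous_const).div_const _
  have h3 : Continuous (fun v : E3 => max (-v 2) 0 / 10) :=
    ((h 2).neg.max continuous_const).div_const _
  exact (((continuous_const.add (h0.smul continuous_const)).add (h1.smul continuous_const)).add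
    (h2.smul continuous_const)).add (h3.smul continuous_const)


lemma three_pages (B : Geometry.SimplicialComplex ℝ W)
    (hball : Nonempty (↥B.space ≃ₜ ↥(Metric.closedBall (0 : E3) 1))) {a b c p q r : W}
    (hp : ({a, b, c, p} : Finset (W)) ∈ B.faces)
    (hq : ({a, b, c, q} : Finset (W)) ∈ B.faces)
    (hr : ({a, b, c, r} : Finset (W)) ∈ B.faces)
    (hab : a ≠ b) (hac : a ≠ c) (hbc : b ≠ c) (hap : a ≠ p) (hbp : b ≠ p) (hcp : c ≠ p)
    (haq : a ≠ q) (hbq : b ≠ q) (hcq : c ≠ q)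
    (har : a ≠ r) (hbr : b ≠ r) (hcr : c ≠ r)
    (hpq : p ≠ q) (hpr : p ≠ r) (hqr : q ≠ r) : False := by
  obtain ⟨ψ⟩ := hball
  let ψ' : W → E3 := fun y => if h : y ∈ B.space then (ψ ⟨y, h⟩ : E3) else 0
  have hψ : ∀ y (h : y ∈ B.space), ψ' y = ψ ⟨y, h⟩ := fun y h => dif_pos h
  have hψc : ContinuousOn ψ' B.space := by
    rw [continuousOn_iff_continuous_domRestrict]
    have : B.space.domRestrict ψ' = fun y => (ψ y : E3) := by
      funext y; exact hψ y y.2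
    rw [this]
    exact continuous_subtype_val.comp ψ.continuous
  have hψi : Set.InjOn ψ' B.space := by
    intro y hy y' hy' h
    rw [hψ y hy, hψ y' hy'] at h
    have := ψ.injective (Subtype.ext h)
    exact congrArg Subtype.val this
  have hsp : ∀ {v : W}, ({a, b, c, v} : Finset (W)) ∈ B.faces →
      ∀ {x y z : ℝ}, 0 ≤ x → 0 ≤ y → 0 ≤ z → x + y + z ≤ 1 → cmb a b c v x y z ∈ B.space := by
    intro v hv x y z hx hy hz h
    exact B.convexHull_subset_space hv (cmb_mem hx hy hz h)
  let φ : E3 → W := fun v =>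
    a + (1/3 + v 0 / 10) • (b - a) + (1/3 + v 1 / 10) • (c - a) + (max (v 2) 0 / 10) • (p - a)
      + (max (-v 2) 0 / 10) • (q - a)
  have hφc : Continuous φ := phi_cont a b c p q
  have hφp : ∀ v : E3, 0 ≤ v 2 → φ v = cmb a b c p (1/3 + v 0 / 10) (1/3 + v 1 / 10) (v 2 / 10) := by
    intro v hv
    simp [φ, cmb, hv]
  have hφq : ∀ v : E3, v 2 ≤ 0 → φ v = cmb a b c q (1/3 + v 0 / 10) (1/3 + v 1 / 10) (-v 2 / 10) := by
    intro v hv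
    simp [φ, cmb, hv]
  have hbd : ∀ v ∈ Metric.closedBall (0:E3) 1, ∀ i, |v i| ≤ 1 := by
    intro v hv i
    have h1 : ‖v‖ ≤ 1 := by simpa using hv
    exact (PiLp.norm_apply_le v i).trans h1
  have hφm : ∀ v ∈ Metric.closedBall (0:E3) 1, φ v ∈ B.space := by
    intro v hv
    have h0 := abs_le.1 (hbd v hv 0)
    have h1 := abs_le.1 (hbd v hv 1)
    have h2 := abs_le.1 (hbd v hv 2)
    rcases le_total 0 (v 2) with h | h
    · rw [hφp v h]
      apply hsp hp <;> linarith
    · rw [hφq v h]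
      apply hsp hq <;> linarith
  have hφi : Set.InjOn φ (Metric.closedBall (0:E3) 1) := by
    intro v hv v' hv' heq
    have h0 := abs_le.1 (hbd v hv 0)
    have h1 := abs_le.1 (hbd v hv 1)
    have h2 := abs_le.1 (hbd v hv 2)
    have h0' := abs_le.1 (hbd v' hv' 0)
    have h1' := abs_le.1 (hbd v' hv' 1)
    have h2' := abs_le.1 (hbd v' hv' 2)
    have key : v 0 = v' 0 ∧ v 1 = v' 1 ∧ v 2 = v' 2 := by
      rcases le_or_gt (v 2) 0 with h | h <;> rcases le_or_gt (v' 2) 0 with h' | h'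
      · rw [hφq v h, hφq v' h'] at heq
        have := cmb_inj (B.indep hq) hab hac hbc haq hbq hcq heq
        refine ⟨by linarith [this.1], by linarith [this.2.1], by linarith [this.2.2]⟩
      · exfalso
        rw [hφq v h, hφp v' h'.le] at heq
        refine cmb_ne B hp hq hab hac hbc hap hbp hcp hpq ?_ ?_ ?_ ?_ ?_ ?_ ?_ ?_ heq.symm <;> linarith
      · exfalso
        rw [hφp v h.le, hφq v' h'] at heq
        refine cmb_ne B hp hq hab hac hbc hap hbp hcp hpq ?_ ?_ ?_ ?_ ?_ ?_ ?_ ?_ heq <;> linarith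
      · rw [hφp v h.le, hφp v' h'.le] at heq
        have := cmb_inj (B.indep hp) hab hac hbc hap hbp hcp heq
        refine ⟨by linarith [this.1], by linarith [this.2.1], by linarith [this.2.2]⟩
    ext i
    fin_cases i
    · exact key.1
    · exact key.2.1
    · exact key.2.2
  have hid := inv_domain (fun v => ψ' (φ v)) (hψc.comp hφc.continuousOn hφm)
    (hψi.comp hφi hφm)
  let γ : ℝ → W := fun s => cmb a b c r (1/3) (1/3) s
  have hγc : Continuous γ := by simp only [γ, cmb]; fun_prop
  have hγm : ∀ s ∈ Set.Icc (0:ℝ) (1/3), γ s ∈ B.space := by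
    intro s hs
    have h1 := hs.1
    have h2 := hs.2
    refine hsp hr ?_ ?_ ?_ ?_ <;> linarith
  have hc : ContinuousOn (fun s => ψ' (γ s)) (Set.Icc (0:ℝ) (1/3)) :=
    hψc.comp hγc.continuousOn hγm
  have hγ0 : γ 0 = φ 0 := by simp [γ, φ, cmb]
  have hn := (hc 0 (by norm_num)).preimage_mem_nhdsWithin
    (t := interior ((fun v => ψ' (φ v)) '' Metric.closedBall 0 1)) (by
      rw [hγ0]
      exact isOpen_interior.mem_nhds hid)
  obtain ⟨ε, hε, hsub⟩ := Metric.mem_nhdsWithin_iff.1 hn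
  let s := min (ε / 2) (1/3)
  have hs0 : 0 < s := lt_min (by positivity) (by norm_num)
  have hs1 : s ≤ 1/3 := min_le_right _ _
  have hs2 : s < ε := (min_le_left _ _).trans_lt (by linarith)
  have hmem := hsub (a := s) ⟨by simpa [abs_of_pos hs0] using hs2, hs0.le, hs1⟩
  obtain ⟨v, hv, hveq⟩ := interior_subset hmem
  have heq : φ v = γ s := hψi (hφm v hv) (hγm s ⟨hs0.le, hs1⟩) hveq
  have h0 := abs_le.1 (hbd v hv 0)
  have h1 := abs_le.1 (hbd v hv 1)
  have h2 := abs_le.1 (hbd v hv 2)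
  rcases le_total 0 (v 2) with h | h
  · rw [hφp v h] at heq
    refine cmb_ne B hr hp hab hac hbc har hbr hcr hpr.symm ?_ ?_ ?_ ?_ ?_ ?_ ?_ ?_ heq.symm <;> linarith
  · rw [hφq v h] at heq
    refine cmb_ne B hr hq hab hac hbc har hbr hcr hqr.symm ?_ ?_ ?_ ?_ ?_ ?_ ?_ ?_ heq.symm <;> linarith

lemma tri_le_two (B : Geometry.SimplicialComplex ℝ W)
    (hball : Nonempty (↥B.space ≃ₜ ↥(Metric.closedBall (0 : E3) 1)))
    (σ F G H : Finset W) (hσ : σ.card = 3) (hF : F ∈ B.faces) (hG : G ∈ B.faces)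
    (hH : H ∈ B.faces) (hF4 : F.card = 4) (hG4 : G.card = 4) (hH4 : H.card = 4)
    (hσF : σ ⊆ F) (hσG : σ ⊆ G) (hσH : σ ⊆ H) : F = G ∨ F = H ∨ G = H := by
  obtain ⟨a, b, c, hab, hac, hbc, rfl⟩ := Finset.card_eq_three.1 hσ
  have ext : ∀ F : Finset W, F.card = 4 → {a, b, c} ⊆ F → ∃ p, a ≠ p ∧ b ≠ p ∧ c ≠ p ∧
      F = {a, b, c, p} := by
    intro F hF4 hs
    have h1 : (F \ {a, b, c}).card = 1 := by
      rw [Finset.card_sdiff_of_subset hs, hF4, hσ]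
    obtain ⟨p, hp⟩ := Finset.card_eq_one.1 h1
    have hpm : p ∈ F \ {a, b, c} := by rw [hp]; simp
    simp only [Finset.mem_sdiff, Finset.mem_insert, Finset.mem_singleton, not_or] at hpm
    refine ⟨p, fun h => hpm.2.1 h.symm, fun h => hpm.2.2.1 h.symm, fun h => hpm.2.2.2 h.symm, ?_⟩
    rw [← Finset.sdiff_union_of_subset hs, hp]
    ext v
    simp only [Finset.mem_union, Finset.mem_insert, Finset.mem_singleton]
    tauto
  obtain ⟨p, hap, hbp, hcp, rfl⟩ := ext F hF4 hσF
  obtain ⟨q, haq, hbq, hcq, rfl⟩ := ext G hG4 hσG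
  obtain ⟨r, har, hbr, hcr, rfl⟩ := ext H hH4 hσH
  by_contra hcon
  push Not at hcon
  refine three_pages B hball hF hG hH hab hac hbc hap hbp hcp haq hbq hcq har hbr hcr ?_ ?_ ?_
  · rintro rfl; exact hcon.1 rfl
  · rintro rfl; exact hcon.2.1 rfl
  · rintro rfl; exact hcon.2.2 rfl

end T1


section Comb
variable {V : Type*}

/-- triangles of `F` containing the edge `e` -/
noncomputable def tri (e F : Finset V) : Finset (Finset V) :=
  (F.powersetCard 3).filter (fun σ => e ⊆ σ)

lemma mem_tri {e F σ : Finset V} : σ ∈ tri e F ↔ σ ⊆ F ∧ σ.card = 3 ∧ e ⊆ σ := by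
  simp [tri, Finset.mem_powersetCard, and_assoc]

lemma card_tri {e F : Finset V} (he : e.card = 2) (hF : F.card = 4) (heF : e ⊆ F) :
    (tri e F).card = 2 := by
  have h2 : (F \ e).card = 2 := by rw [Finset.card_sdiff_of_subset heF, he, hF]
  have : tri e F = (F \ e).image (fun x => insert x e) := by
    ext σ
    rw [mem_tri, Finset.mem_image]
    constructor
    · rintro ⟨h1, h3, h4⟩
      have : (σ \ e).card = 1 := by rw [Finset.card_sdiff_of_subset h4, he, h3]
      obtain ⟨x, hx⟩ := Finset.card_eq_one.1 this
      have hxm : x ∈ σ \ e := by rw [hx]; simp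
      rw [Finset.mem_sdiff] at hxm
      refine ⟨x, Finset.mem_sdiff.2 ⟨h1 hxm.1, hxm.2⟩, ?_⟩
      rw [← Finset.sdiff_union_of_subset h4, hx]
      rfl
    · rintro ⟨x, hx, rfl⟩
      rw [Finset.mem_sdiff] at hx
      refine ⟨Finset.insert_subset hx.1 heF, ?_, Finset.subset_insert _ _⟩
      rw [Finset.card_insert_of_notMem hx.2, he]
  rw [this, Finset.card_image_of_injOn, h2]
  intro x hx y hy hxy
  simp only [Finset.coe_sdiff, Set.mem_sdiff, Finset.mem_coe] at hx hy
  have : x ∈ insert y e := by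
    have h := Finset.mem_insert_self x e
    simp only at hxy
    rwa [hxy] at h
  rw [Finset.mem_insert] at this
  exact this.resolve_right hx.2

noncomputable def Rr (e : Finset V) (l : List (Finset V)) : Finset (Finset V) :=
  l.toFinset.filter (fun F => e ⊆ F)

noncomputable def Vv (e : Finset V) (l : List (Finset V)) : Finset (Finset V) :=
  (Rr e l).biUnion (tri e)

lemma mem_Rr {e F : Finset V} {l : List (Finset V)} : F ∈ Rr e l ↔ F ∈ l ∧ e ⊆ F := by
  simp [Rr]

lemma mem_Vv {e σ : Finset V} {l : List (Finset V)} :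
    σ ∈ Vv e l ↔ ∃ F ∈ l, σ ∈ tri e F := by
  simp only [Vv, Finset.mem_biUnion, mem_Rr]
  constructor
  · rintro ⟨F, ⟨h1, _⟩, h2⟩; exact ⟨F, h1, h2⟩
  · rintro ⟨F, h1, h2⟩
    have := mem_tri.1 h2
    exact ⟨F, ⟨h1, this.2.2.trans this.1⟩, h2⟩

/-- link-shelling property -/
def Good (e : Finset V) (l : List (Finset V)) : Prop :=
  ∀ F rest, (F :: rest) <:+ l → e ⊆ F → (∃ G ∈ rest, e ⊆ G) → ∃ σ ∈ tri e F, σ ∈ Vv e rest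

lemma Rr_cons_pos {e F : Finset V} {l : List (Finset V)} (h : e ⊆ F) :
    Rr e (F :: l) = insert F (Rr e l) := by
  ext G; simp only [mem_Rr, List.mem_cons, Finset.mem_insert]
  constructor
  · rintro ⟨rfl | h1, h2⟩
    · exact Or.inl rfl
    · exact Or.inr ⟨h1, h2⟩
  · rintro (rfl | ⟨h1, h2⟩)
    · exact ⟨Or.inl rfl, h⟩
    · exact ⟨Or.inr h1, h2⟩

lemma Rr_cons_neg {e F : Finset V} {l : List (Finset V)} (h : ¬ e ⊆ F) :
    Rr e (F :: l) = Rr e l := by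
  ext G; simp only [mem_Rr, List.mem_cons]
  constructor
  · rintro ⟨rfl | h1, h2⟩
    · exact absurd h2 h
    · exact ⟨h1, h2⟩
  · rintro ⟨h1, h2⟩
    exact ⟨Or.inr h1, h2⟩

lemma Vv_cons_pos {e F : Finset V} {l : List (Finset V)} (h : e ⊆ F) :
    Vv e (F :: l) = tri e F ∪ Vv e l := by
  rw [Vv, Rr_cons_pos h, Finset.biUnion_insert]; rfl

lemma Vv_cons_neg {e F : Finset V} {l : List (Finset V)} (h : ¬ e ⊆ F) :
    Vv e (F :: l) = Vv e l := by
  rw [Vv, Rr_cons_neg h]; rfl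

lemma Good.tail {e F : Finset V} {l : List (Finset V)} (h : Good e (F :: l)) : Good e l :=
  fun G rest hs => h G rest (hs.trans (List.suffix_cons F l))

/-- one step of the count when something containing `e` remains -/
lemma step_card {e F : Finset V} {l : List (Finset V)} (he : e.card = 2) (hF : F.card = 4)
    (heF : e ⊆ F) (hg : Good e (F :: l)) (hne : ∃ G ∈ l, e ⊆ G) (hFl : F ∉ l) :
    (Vv e (F :: l)).card ≤ (Vv e l).card + 1 ∧ (Rr e (F :: l)).card = (Rr e l).card + 1 := by
  constructor
  · obtain ⟨σ, hσ, hσ'⟩ := hg F l (List.suffix_refl _) heF hne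
    rw [Vv_cons_pos heF]
    have h1 := Finset.card_union_add_card_inter (tri e F) (Vv e l)
    have h2 : 0 < (tri e F ∩ Vv e l).card :=
      Finset.card_pos.2 ⟨σ, Finset.mem_inter.2 ⟨hσ, hσ'⟩⟩
    rw [card_tri he hF heF] at h1
    omega
  · rw [Rr_cons_pos heF, Finset.card_insert_of_notMem]
    rw [mem_Rr]; exact fun h => hFl h.1

lemma count1 {e : Finset V} (he : e.card = 2) (l : List (Finset V)) (hnd : l.Nodup)
    (h4 : ∀ F ∈ l, F.card = 4) (hg : Good e l) : (Vv e l).card ≤ (Rr e l).card + 1 := by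
  induction l with
  | nil => simp [Vv, Rr]
  | cons F l ih =>
    have ih := ih (List.nodup_cons.1 hnd).2 (fun G hG => h4 G (List.mem_cons_of_mem _ hG)) hg.tail
    by_cases heF : e ⊆ F
    · have hFc := h4 F List.mem_cons_self
      by_cases hne : ∃ G ∈ l, e ⊆ G
      · have := step_card he hFc heF hg hne (List.nodup_cons.1 hnd).1
        omega
      · have hR : Rr e l = ∅ := by
          rw [Finset.eq_empty_iff_forall_notMem]
          intro G hG
          exact hne ⟨G, mem_Rr.1 hG⟩
        rw [Vv_cons_pos heF, Rr_cons_pos heF, Vv, hR]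
        simp [card_tri he hFc heF]
    · rw [Vv_cons_neg heF, Rr_cons_neg heF]; exact ih

lemma count2 {e : Finset V} (he : e.card = 2) (l : List (Finset V)) (hnd : l.Nodup)
    (h4 : ∀ F ∈ l, F.card = 4) (hg : Good e l) (F : Finset V) (rest : List (Finset V))
    (hs : (F :: rest) <:+ l) (heF : e ⊆ F) (hne : ∃ G ∈ rest, e ⊆ G)
    (htri : tri e F ⊆ Vv e rest) : (Vv e l).card ≤ (Rr e l).card := by
  induction l with
  | nil => simp at hs
  | cons F' l ih =>
    rw [List.suffix_cons_iff] at hs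
    have hnd' := List.nodup_cons.1 hnd
    have h4' : ∀ G ∈ l, G.card = 4 := fun G hG => h4 G (List.mem_cons_of_mem _ hG)
    rcases hs with hs | hs
    · obtain ⟨rfl, rfl⟩ := List.cons.inj hs
      have h1 := count1 he rest hnd'.2 h4' hg.tail
      have h2 := step_card he (h4 F List.mem_cons_self) heF hg hne hnd'.1
      rw [Vv_cons_pos heF, Finset.union_eq_right.2 htri]
      omega
    · have ih := ih hnd'.2 h4' hg.tail hs
      by_cases heF' : e ⊆ F'
      · have hne' : ∃ G ∈ l, e ⊆ G := ⟨F, hs.subset List.mem_cons_self, heF⟩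
        have := step_card he (h4 F' List.mem_cons_self) heF' hg hne' hnd'.1
        omega
      · rw [Vv_cons_neg heF', Rr_cons_neg heF']; exact ih

lemma dcount {e : Finset V} (he : e.card = 2) (l : List (Finset V))
    (h4 : ∀ F ∈ l, F.card = 4)
    (h2 : ∀ σ F G H : Finset V, σ.card = 3 → F ∈ l → G ∈ l → H ∈ l → σ ⊆ F → σ ⊆ G → σ ⊆ H →
      F = G ∨ F = H ∨ G = H)
    (σ0 F0 : Finset V) (hF0 : F0 ∈ l) (hσ0 : σ0 ∈ tri e F0)
    (hu : ∀ F ∈ l, σ0 ⊆ F → F = F0) :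
    (Rr e l).card < (Vv e l).card := by
  have hdc := Finset.sum_card_bipartiteAbove_eq_sum_card_bipartiteBelow
    (s := Rr e l) (t := Vv e l) (fun F σ => σ ⊆ F)
  have hl : ∀ F ∈ Rr e l, (Finset.bipartiteAbove (fun F σ => σ ⊆ F) (Vv e l) F).card = 2 := by
    intro F hF
    have hF' := mem_Rr.1 hF
    rw [← card_tri he (h4 F hF'.1) hF'.2]
    congr 1
    ext σ
    simp only [Finset.bipartiteAbove, Finset.mem_filter, mem_Vv]
    constructor
    · rintro ⟨⟨G, hG, hσ⟩, hσF⟩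
      have := mem_tri.1 hσ
      exact mem_tri.2 ⟨hσF, this.2⟩
    · intro hσ
      exact ⟨⟨F, hF'.1, hσ⟩, (mem_tri.1 hσ).1⟩
  rw [Finset.sum_congr rfl hl, Finset.sum_const, smul_eq_mul] at hdc
  have hle : ∀ σ ∈ Vv e l, (Finset.bipartiteBelow (fun F σ => σ ⊆ F) (Rr e l) σ).card ≤ 2 := by
    intro σ hσ
    obtain ⟨_, _, hσ'⟩ := mem_Vv.1 hσ
    by_contra hcon
    push Not at hcon
    obtain ⟨F, G, H, hF, hG, hH, h1, h3, h5⟩ := Finset.two_lt_card_iff.1 hcon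
    simp only [Finset.bipartiteBelow, Finset.mem_filter, mem_Rr] at hF hG hH
    rcases h2 σ F G H (mem_tri.1 hσ').2.1 hF.1.1 hG.1.1 hH.1.1 hF.2 hG.2 hH.2 with h | h | h
    · exact h1 h
    · exact h3 h
    · exact h5 h
  have hlt : (Finset.bipartiteBelow (fun F σ => σ ⊆ F) (Rr e l) σ0).card < 2 := by
    have : Finset.bipartiteBelow (fun F σ => σ ⊆ F) (Rr e l) σ0 ⊆ {F0} := by
      intro F hF
      simp only [Finset.bipartiteBelow, Finset.mem_filter, mem_Rr] at hF
      exact Finset.mem_singleton.2 (hu F hF.1.1 hF.2)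
    have := Finset.card_le_card this
    simp at this
    omega
  have hs := Finset.sum_lt_sum hle ⟨σ0, mem_Vv.2 ⟨F0, hF0, hσ0⟩, hlt⟩
  rw [← hdc, Finset.sum_const, smul_eq_mul] at hs
  omega

lemma good_of_shelling {K : Set (Finset V)} {l : List (Finset V)}
    (hdown : ∀ σ τ : Finset V, σ ∈ K → τ ⊆ σ → τ.Nonempty → τ ∈ K)
    (hs : IsShellingDown K 3 l (l.length - 1)) {e : Finset V} (he : e.card = 2) : Good e l := by
  obtain ⟨hnd, hfac, -, hst⟩ := hs
  rintro F rest ⟨pre, hpre⟩ heF ⟨G, hG, heG⟩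
  have hlen : pre.length < l.length - 1 := by
    have h1 := List.length_pos_of_mem hG
    rw [← hpre]; simp; omega
  have hp := hst pre.length hlen
  have hget : l.getD pre.length ∅ = F := by rw [← hpre]; simp
  have hdrop : l.drop (pre.length + 1) = rest := by rw [← hpre]; simp [List.drop_append]
  rw [hget, hdrop] at hp
  set T := generatedByL K [F] ∩ generatedByL K rest with hT
  have hFK : F ∈ K := ((hfac F).1 (by rw [← hpre]; simp)).1
  have heK : e ∈ K := hdown F e hFK heF (Finset.card_pos.1 (by omega))
  have heT : e ∈ T := ⟨⟨heK, F, by simp, heF⟩, ⟨heK, G, hG, heG⟩⟩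
  have hTF : ∀ σ ∈ T, σ ⊆ F := by
    rintro σ ⟨⟨_, θ, hθ, hσ⟩, _⟩
    rw [List.mem_singleton] at hθ
    exact hθ ▸ hσ
  have hTfin : T.Finite := (F.powerset.finite_toSet).subset (fun σ hσ => by
    simpa using hTF σ hσ)
  obtain ⟨σ, heσ, hmax⟩ := hTfin.exists_le_maximal heT
  have hc := hp.2 σ ⟨hmax.prop, fun τ hτ hle => le_antisymm hle (hmax.le_of_ge hτ hle)⟩
  obtain ⟨_, G', hG', hσG'⟩ := hmax.prop.2
  exact ⟨σ, mem_tri.2 ⟨hTF σ hmax.prop, hc, heσ⟩, mem_Vv.2 ⟨G', hG', mem_tri.2 ⟨hσG', hc, heσ⟩⟩⟩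

lemma sep {K : Set (Finset V)} {l : List (Finset V)}
    (hdown : ∀ σ τ : Finset V, σ ∈ K → τ ⊆ σ → τ.Nonempty → τ ∈ K)
    (hpure : PureDim K 3) (hfin : K.Finite)
    (h2 : ∀ σ F G H : Finset V, σ.card = 3 → F ∈ K → G ∈ K → H ∈ K →
      F.card = 4 → G.card = 4 → H.card = 4 → σ ⊆ F → σ ⊆ G → σ ⊆ H → F = G ∨ F = H ∨ G = H)
    (hs : IsShellingDown K 3 l (l.length - 1)) {e : Finset V} (he : e.card = 2)
    (heb : e ∈ bdry K 3) {F G H σ τ : Finset V} (hF : F ∈ K) (hG : G ∈ K) (hH : H ∈ K)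
    (hF4 : F.card = 4) (hG4 : G.card = 4) (hH4 : H.card = 4)
    (hσ : σ ∈ tri e F) (hτ : τ ∈ tri e F) (hστ : σ ≠ τ) (hσG : σ ⊆ G) (hτH : τ ⊆ H)
    (hFG : l.idxOf F < l.idxOf G) (hFH : l.idxOf F < l.idxOf H) : False := by
  have hgood := good_of_shelling hdown hs he
  obtain ⟨hnd, hfac, -, -⟩ := hs
  have h4 : ∀ F ∈ l, F.card = 4 := fun F hF => hpure.2 F ((hfac F).1 hF)
  have hmem : ∀ F ∈ K, F.card = 4 → F ∈ l := by
    intro F hF hc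
    obtain ⟨M, hFM, hmax⟩ := hfin.exists_le_maximal hF
    have hM : IsFacet K M := ⟨hmax.prop, fun τ hτ hle => le_antisymm hle (hmax.le_of_ge hτ hle)⟩
    have : F = M := Finset.eq_of_subset_of_card_le hFM (by rw [hpure.2 M hM, hc])
    rw [this]; exact (hfac M).2 hM
  have hlK : ∀ F ∈ l, F ∈ K := fun F hF => ((hfac F).1 hF).1
  obtain ⟨pre, rest, hl, hnp⟩ := List.eq_append_cons_of_mem (hmem F hF hF4)
  have hidx : l.idxOf F = pre.length := by
    rw [hl, List.idxOf_append_of_notMem hnp]; simp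
  have hrest : ∀ G ∈ K, G.card = 4 → l.idxOf F < l.idxOf G → G ∈ rest := by
    intro G hG hG4 hlt
    have hGl := hmem G hG hG4
    rw [hl, List.mem_append, List.mem_cons] at hGl
    rcases hGl with h | h | h
    · have : l.idxOf G < pre.length := by
        rw [hl, List.idxOf_append_of_mem h]
        exact List.idxOf_lt_length_of_mem h
      omega
    · rw [h] at hlt; omega
    · exact h
  have hGr := hrest G hG hG4 hFG
  have hHr := hrest H hH hH4 hFH
  have hσ' := mem_tri.1 hσ
  have hτ' := mem_tri.1 hτ
  have heF := hσ'.2.2.trans hσ'.1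
  have htri : tri e F ⊆ Vv e rest := by
    have : ({σ, τ} : Finset (Finset V)) = tri e F := by
      apply Finset.eq_of_subset_of_card_le
      · intro x hx
        rw [Finset.mem_insert, Finset.mem_singleton] at hx
        rcases hx with rfl | rfl <;> assumption
      · rw [card_tri he hF4 heF, Finset.card_pair hστ]
    rw [← this]
    intro x hx
    rw [Finset.mem_insert, Finset.mem_singleton] at hx
    rcases hx with rfl | rfl
    · exact mem_Vv.2 ⟨G, hGr, mem_tri.2 ⟨hσG, hσ'.2⟩⟩
    · exact mem_Vv.2 ⟨H, hHr, mem_tri.2 ⟨hτH, hτ'.2⟩⟩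
  have c2 := count2 he l hnd h4 hgood F rest ⟨pre, hl.symm⟩ heF
    ⟨G, hGr, hσ'.2.2.trans hσG⟩ htri
  obtain ⟨_, θ, ⟨_, hθ3, F0, ⟨hF0, hF04, hθF0⟩, hun⟩, heθ⟩ := heb
  have c3 := dcount he l h4 (fun σ F G H hc hF hG hH => h2 σ F G H hc (hlK F hF) (hlK G hG)
    (hlK H hH) (h4 F hF) (h4 G hG) (h4 H hH)) θ F0 (hmem F0 hF0 hF04) (mem_tri.2 ⟨hθF0, hθ3, heθ⟩)
    (fun F hF hθF => hun F ⟨hlK F hF, h4 F hF, hθF⟩)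
  omega

lemma before_of_idx {l : List (Finset V)} {F G : Finset V} (hG : G ∈ l)
    (h : l.idxOf F < l.idxOf G) : Before l F G := by
  have hG' := List.idxOf_lt_length_of_mem hG
  refine ⟨l.idxOf F, l.idxOf G, h, hG', ?_, ?_⟩
  · rw [List.getD_eq_getElem _ _ (h.trans hG')]; exact List.getElem_idxOf _
  · rw [List.getD_eq_getElem _ _ hG']; exact List.getElem_idxOf _
end Comb

section Main
variable {V : Type*}

lemma sep_next {K : Set (Finset V)} {l : List (Finset V)}
    (hdown : ∀ σ τ, σ ∈ K → τ ⊆ σ → τ.Nonempty → τ ∈ K) (hpure : PureDim K 3) (hfin : K.Finite)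
    (h2 : ∀ σ F G H : Finset V, σ.card = 3 → F ∈ K → G ∈ K → H ∈ K → F.card = 4 → G.card = 4 →
      H.card = 4 → σ ⊆ F → σ ⊆ G → σ ⊆ H → F = G ∨ F = H ∨ G = H)
    (hs : IsShellingDown K 3 l (l.length - 1))
    (hmem : ∀ F ∈ K, F.card = 4 → F ∈ l)
    {d a b c : V} (hda : d ≠ a) (hdb : d ≠ b) (hdc : d ≠ c) (hab : a ≠ b) (hac : a ≠ c)
    (hbc : b ≠ c) (heb : ∀ e : Finset V, (∀ v, v ∈ e ↔ v = d ∨ v = a) → e ∈ bdry K 3)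
    {F G H : Finset V} (hF : F ∈ K) (hG : G ∈ K) (hH : H ∈ K)
    (hF4 : F.card = 4) (hG4 : G.card = 4) (hH4 : H.card = 4)
    (hFd : d ∈ F) (hFa : a ∈ F) (hFb : b ∈ F) (hFc : c ∈ F)
    (hGd : d ∈ G) (hGa : a ∈ G) (hGb : b ∈ G)
    (hHd : d ∈ H) (hHa : a ∈ H) (hHc : c ∈ H) (hHF : H ≠ F)
    (hFG : l.idxOf F < l.idxOf G) : l.idxOf H < l.idxOf F := by
  by_contra hcon
  have hne : l.idxOf H ≠ l.idxOf F := fun h => hHF ((List.idxOf_inj (hmem H hH hH4)).1 h)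
  have hFH : l.idxOf F < l.idxOf H := by omega
  have e2 : ({d, a} : Finset V).card = 2 := Finset.card_pair hda
  have s3 : ({d, a, b} : Finset V).card = 3 := Finset.card_eq_three.2 ⟨d, a, b, hda, hdb, hab, rfl⟩
  have t3 : ({d, a, c} : Finset V).card = 3 := Finset.card_eq_three.2 ⟨d, a, c, hda, hdc, hac, rfl⟩
  have hsub : ∀ (x : V) (X : Finset V), d ∈ X → a ∈ X → x ∈ X → ({d, a, x} : Finset V) ⊆ X := by
    intro x X h1 h2 h3 v hv
    simp only [Finset.mem_insert, Finset.mem_singleton] at hv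
    rcases hv with rfl | rfl | rfl <;> assumption
  have hesub : ∀ x : V, ({d, a} : Finset V) ⊆ {d, a, x} := by
    intro x v hv
    simp only [Finset.mem_insert, Finset.mem_singleton] at hv ⊢
    tauto
  refine sep hdown hpure hfin h2 hs e2 (heb _ (by simp)) hF hG hH hF4 hG4 hH4
    (mem_tri.2 ⟨hsub b F hFd hFa hFb, s3, hesub b⟩) (mem_tri.2 ⟨hsub c F hFd hFa hFc, t3, hesub c⟩)
    ?_ (hsub b G hGd hGa hGb) (hsub c H hHd hHa hHc) hFG hFH
  intro h
  have : b ∈ ({d, a, c} : Finset V) := by rw [← h]; simp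
  simp only [Finset.mem_insert, Finset.mem_singleton] at this
  rcases this with h | h | h
  · exact hdb h.symm
  · exact hab h.symm
  · exact hbc h

lemma main_comb {K : Set (Finset V)} {l : List (Finset V)}
    (hdown : ∀ σ τ, σ ∈ K → τ ⊆ σ → τ.Nonempty → τ ∈ K) (hpure : PureDim K 3) (hfin : K.Finite)
    (h2 : ∀ σ F G H : Finset V, σ.card = 3 → F ∈ K → G ∈ K → H ∈ K → F.card = 4 → G.card = 4 →
      H.card = 4 → σ ⊆ F → σ ⊆ G → σ ⊆ H → F = G ∨ F = H ∨ G = H)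
    (hs : IsShellingDown K 3 l (l.length - 1))
    (hmem : ∀ F ∈ K, F.card = 4 → F ∈ l)
    (k : ℕ) (hk : 2 ≤ k) (d w : V) (u : ℕ → V) (hdw : d ≠ w)
    (hdu : ∀ i, 1 ≤ i → i ≤ k → u i ≠ d ∧ u i ≠ w)
    (huu : ∀ i j, 1 ≤ i → i ≤ k → 1 ≤ j → j ≤ k → i ≠ j → u i ≠ u j)
    (D : ℕ → Finset V) (hD : ∀ i v, v ∈ D i ↔ v = d ∨ v = w ∨ v = u i ∨ v = u (i + 1))
    (hDK : ∀ i, 1 ≤ i → i ≤ k - 1 → D i ∈ K)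
    (hedges : ∀ e : Finset V, e.card = 2 → d ∈ e → ∀ i, 1 ≤ i → i ≤ k - 1 → e ⊆ D i →
      e ∈ bdry K 3)
    (D' : ℕ → Finset V) (hD'K : ∀ i ≤ k, D' i ∈ K) (hD'4 : ∀ i ≤ k, (D' i).card = 4)
    (hne : ∀ i ≤ k, ∀ j, 1 ≤ j → j ≤ k - 1 → D' i ≠ D j)
    (hd : ∀ i ≤ k, d ∈ D' i) (hw0 : w ∈ D' 0) (hu0 : u 1 ∈ D' 0)
    (hi : ∀ i, 1 ≤ i → i ≤ k - 1 → u i ∈ D' i ∧ u (i + 1) ∈ D' i)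
    (hwk : w ∈ D' k) (huk : u k ∈ D' k) :
    Before l (D' 0) (D 1) ∨ ∀ i, 1 ≤ i → i ≤ k → Before l (D' i) (D 1) := by
  have hD4 : ∀ i, 1 ≤ i → i ≤ k - 1 → (D i).card = 4 := by
    intro i h1 h2
    have a1 := hdu i h1 (by omega)
    have a2 := hdu (i + 1) (by omega) (by omega)
    have a3 := huu i (i + 1) h1 (by omega) (by omega) (by omega) (by omega)
    have : D i = ({d, w, u i, u (i + 1)} : Finset V) := by
      ext v; rw [hD]; simp
    rw [this, Finset.card_insert_of_notMem, Finset.card_insert_of_notMem,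
      Finset.card_insert_of_notMem, Finset.card_singleton]
    · simpa using a3
    · simp [a1.2.symm, a2.2.symm]
    · simp [hdw, a1.1.symm, a2.1.symm]
  have hDl : ∀ i, 1 ≤ i → i ≤ k - 1 → D i ∈ l := fun i h1 h2 => hmem _ (hDK i h1 h2) (hD4 i h1 h2)
  by_cases h0 : l.idxOf (D' 0) < l.idxOf (D 1)
  · exact Or.inl (before_of_idx (hDl 1 le_rfl (by omega)) h0)
  right
  have h0' : l.idxOf (D 1) < l.idxOf (D' 0) := by
    have : l.idxOf (D' 0) ≠ l.idxOf (D 1) := fun h =>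
      hne 0 (by omega) 1 le_rfl (by omega) ((List.idxOf_inj
        (hmem _ (hD'K 0 (by omega)) (hD'4 0 (by omega)))).1 h)
    omega
  have heb : ∀ a i, 1 ≤ i → i ≤ k - 1 → a ≠ d → a ∈ D i →
      ∀ e : Finset V, (∀ v, v ∈ e ↔ v = d ∨ v = a) → e ∈ bdry K 3 := by
    intro a i h1 h2 had haD e he
    have he' : e = {d, a} := by ext v; rw [he]; simp
    refine hedges e (by rw [he']; exact Finset.card_pair had.symm) ((he d).2 (Or.inl rfl)) i h1 h2 ?_
    intro v hv
    rcases (he v).1 hv with rfl | rfl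
    · rw [hD]; simp
    · exact haD
  let P : ℕ → Finset V := fun i => if i = 0 then D' 0 else if i = k then D' k else D i
  have hP0 : P 0 = D' 0 := by simp [P]
  have hPk : P k = D' k := by simp only [P]; split_ifs <;> grind
  have hPi : ∀ i, 1 ≤ i → i ≤ k - 1 → P i = D i := by
    intro i h1 h2
    simp only [P]
    rw [if_neg (by omega), if_neg (by omega)]
  have hPK : ∀ i ≤ k, P i ∈ K ∧ (P i).card = 4 ∧ d ∈ P i ∧ w ∈ P i := by
    intro i hik
    rcases Nat.eq_zero_or_pos i with rfl | hpos
    · rw [hP0]; exact ⟨hD'K 0 hik, hD'4 0 hik, hd 0 hik, hw0⟩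
    rcases Nat.eq_or_lt_of_le hik with rfl | hlt
    · rw [hPk]; exact ⟨hD'K _ hik, hD'4 _ hik, hd _ hik, hwk⟩
    · rw [hPi i hpos (by omega)]
      exact ⟨hDK i hpos (by omega), hD4 i hpos (by omega), by rw [hD]; simp, by rw [hD]; simp⟩
  have hPu : ∀ i, 1 ≤ i → i ≤ k - 1 → u i ∈ P (i - 1) ∧ u (i + 1) ∈ P (i + 1) := by
    intro i h1 h2
    constructor
    · rcases Nat.eq_or_lt_of_le h1 with rfl | h
      · simpa [hP0] using hu0
      · rw [hPi (i - 1) (by omega) (by omega), hD, Nat.sub_add_cancel h1]; simp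
    · by_cases h : i + 1 = k
      · rw [h, hPk]; exact huk
      · rw [hPi (i + 1) (by omega) (by omega), hD]; simp
  have hPne : ∀ i, 1 ≤ i → i ≤ k - 1 → P (i + 1) ≠ D i := by
    intro i h1 h2
    by_cases h : i + 1 = k
    · rw [h, hPk]; exact hne k le_rfl i h1 h2
    · rw [hPi (i + 1) (by omega) (by omega)]
      intro he
      have : u (i + 1 + 1) ∈ D i := by rw [← he, hD]; simp
      rw [hD] at this
      have a2 := hdu (i + 2) (by omega) (by omega)
      rcases this with h | h | h | h
      · exact a2.1 h
      · exact a2.2 h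
      · exact huu (i + 2) i (by omega) (by omega) (by omega) (by omega) (by omega) h
      · exact huu (i + 2) (i + 1) (by omega) (by omega) (by omega) (by omega) (by omega) h
  have key : ∀ i, i + 1 ≤ k → l.idxOf (P (i + 1)) < l.idxOf (P i) := by
    intro i
    induction i with
    | zero =>
      intro _
      rw [hPi 1 le_rfl (by omega), hP0]; exact h0'
    | succ i ih =>
      intro hik
      have IH := ih (by omega)
      have h1 : 1 ≤ i + 1 := by omega
      have h2' : i + 1 ≤ k - 1 := by omega
      have a1 := hdu (i + 1) h1 (by omega)
      have a2 := hdu (i + 1 + 1) (by omega) (by omega)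
      have a3 := huu (i + 1) (i + 1 + 1) h1 (by omega) (by omega) (by omega) (by omega)
      have p1 := hPK i (by omega)
      have p2 := hPK (i + 1 + 1) (by omega)
      have q := hPu (i + 1) h1 h2'
      have r := hPne (i + 1) h1 h2'
      rw [hPi (i + 1) h1 h2'] at IH ⊢
      exact sep_next hdown hpure hfin h2 hs hmem hdw a1.1.symm a2.1.symm a1.2.symm a2.2.symm a3
        (heb w (i + 1) h1 h2' hdw.symm (by rw [hD]; simp)) (hDK _ h1 h2') p1.1 p2.1
        (hD4 _ h1 h2') p1.2.1 p2.2.1 (by rw [hD]; simp) (by rw [hD]; simp) (by rw [hD]; simp)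
        (by rw [hD]; simp) p1.2.2.1 p1.2.2.2 q.1 p2.2.2.1 p2.2.2.2 q.2 r IH
  have mono : ∀ i, 1 ≤ i → i ≤ k → l.idxOf (P i) ≤ l.idxOf (D 1) := by
    intro i h1
    induction i, h1 using Nat.le_induction with
    | base => intro _; rw [hPi 1 le_rfl (by omega)]
    | succ i h1 ih => intro hik; exact ((key i hik).trans_le (ih (by omega))).le
  intro i h1 hik
  refine before_of_idx (hDl 1 le_rfl (by omega)) ?_
  rcases Nat.eq_or_lt_of_le hik with h | hlt
  · obtain ⟨j, rfl⟩ : ∃ j, k = j + 1 := ⟨k - 1, by omega⟩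
    rw [h, ← hPk]
    exact (key j le_rfl).trans_le (mono j (by omega) (by omega))
  · have h2' : i ≤ k - 1 := by omega
    have hm := mono i h1 hik
    rw [hPi i h1 h2'] at hm
    refine lt_of_lt_of_le ?_ hm
    have a1 := hdu i h1 (by omega)
    have a2 := hdu (i + 1) (by omega) (by omega)
    have a3 := huu i (i + 1) h1 (by omega) (by omega) (by omega) (by omega)
    have p1 := hPK (i - 1) (by omega)
    have q := hPu i h1 h2'
    have IH := key (i - 1) (by omega)
    rw [Nat.sub_add_cancel h1, hPi i h1 h2'] at IH
    exact sep_next hdown hpure hfin h2 hs hmem a1.1.symm hdw a2.1.symm a1.2 a3 a2.2.symm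
        (heb (u i) i h1 h2' a1.1 (by rw [hD]; simp)) (hDK _ h1 h2') p1.1 (hD'K i hik)
        (hD4 _ h1 h2') p1.2.1 (hD'4 i hik) (by rw [hD]; simp) (by rw [hD]; simp) (by rw [hD]; simp)
        (by rw [hD]; simp) p1.2.2.1 q.1 p1.2.2.2 (hd i hik) (hi i h1 h2').1 (hi i h1 h2').2
        (hne i hik i h1 h2') IH

lemma mem_list_of_card {K : Set (Finset V)} {l : List (Finset V)} {m : ℕ} (hpure : PureDim K 3)
    (hfin : K.Finite) (hs : IsShellingDown K 3 l m) : ∀ F ∈ K, F.card = 4 → F ∈ l := by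
  obtain ⟨hnd, hfac, -, -⟩ := hs
  intro F hF hc
  obtain ⟨M, hFM, hmax⟩ := hfin.exists_le_maximal hF
  have hM : IsFacet K M := ⟨hmax.prop, fun τ hτ hle => le_antisymm hle (hmax.le_of_ge hτ hle)⟩
  have : F = M := Finset.eq_of_subset_of_card_le hFM (by rw [hpure.2 M hM, hc])
  rw [this]; exact (hfac M).2 hM
end Main

/-- Lemma 9.2 (conjunction cone). -/
theorem conjunction_cone {N : ℕ} (k : ℕ) (hk : 2 ≤ k)
    (B : Geometry.SimplicialComplex ℝ (EuclideanSpace ℝ (Fin N)))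
    (hfin : B.faces.Finite)
    (hball : IsBallSet 3 B.space)
    (hpure : PureDim B.faces 3)
    (d w : EuclideanSpace ℝ (Fin N)) (u : ℕ → EuclideanSpace ℝ (Fin N))
    (hdw : d ≠ w)
    (hdu : ∀ i, 1 ≤ i → i ≤ k → u i ≠ d ∧ u i ≠ w)
    (huu : ∀ i j, 1 ≤ i → i ≤ k → 1 ≤ j → j ≤ k → i ≠ j → u i ≠ u j)
    -- the conjunction cone `C`, generated by the tetrahedra Δ_i = {d,w₋,u_i,u_{i+1}}
    (C : Set (Finset (EuclideanSpace ℝ (Fin N))))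
    (hC : C = {σ : Finset (EuclideanSpace ℝ (Fin N)) | σ ≠ ∅ ∧ ∃ i, 1 ≤ i ∧ i ≤ k - 1 ∧
      σ ⊆ ({d, w, u i, u (i + 1)} : Finset (EuclideanSpace ℝ (Fin N)))})
    (hCB : C ⊆ B.faces)
    -- the edges ε_0,…,ε_k
    (ε : ℕ → Finset (EuclideanSpace ℝ (Fin N)))
    (hε0 : ε 0 = ({w, u 1} : Finset (EuclideanSpace ℝ (Fin N))))
    (hεk : ε k = ({u k, w} : Finset (EuclideanSpace ℝ (Fin N))))
    (hεi : ∀ i, 1 ≤ i → i ≤ k - 1 →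
      ε i = ({u i, u (i + 1)} : Finset (EuclideanSpace ℝ (Fin N))))
    -- every edge of C containing d lies in ∂B
    (hedges : ∀ e ∈ C, d ∈ e → e.card = 2 → e ∈ bdry B.faces 3)
    -- none of the triangles ε_i ∪ {d} lies in ∂B
    (htris : ∀ i ≤ k, insert d (ε i) ∉ bdry B.faces 3)
    -- Δ'_i: the unique 3-face of B outside C containing ε_i ∪ {d}
    (Δ' : ℕ → Finset (EuclideanSpace ℝ (Fin N)))
    (hΔ' : ∀ i ≤ k, Δ' i ∈ B.faces ∧ Δ' i ∉ C ∧ (Δ' i).card = 4 ∧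
      insert d (ε i) ⊆ Δ' i ∧
      ∀ F ∈ B.faces, F ∉ C → F.card = 4 → insert d (ε i) ⊆ F → F = Δ' i)
    -- a shelling down of B to a single 3-face
    (l : List (Finset (EuclideanSpace ℝ (Fin N))))
    (hshell : IsShellingDown B.faces 3 l (l.length - 1)) :
    Before l (Δ' 0) ({d, w, u 1, u 2} : Finset (EuclideanSpace ℝ (Fin N))) ∨
    ∀ i, 1 ≤ i → i ≤ k →
      Before l (Δ' i) ({d, w, u 1, u 2} : Finset (EuclideanSpace ℝ (Fin N))) := by
  have hmC : ∀ i, 1 ≤ i → i ≤ k - 1 →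
      ({d, w, u i, u (i + 1)} : Finset (EuclideanSpace ℝ (Fin N))) ∈ C := by
    intro i h1 h2
    rw [hC]
    exact ⟨(Finset.insert_nonempty _ _).ne_empty, i, h1, h2, Finset.Subset.refl _⟩
  have hsub0 := (hΔ' 0 (by omega)).2.2.2.1
  have hsubk := (hΔ' k le_rfl).2.2.2.1
  refine main_comb (K := B.faces) (l := l) ?_ hpure hfin ?_ hshell
    (mem_list_of_card hpure hfin hshell) k hk d w u hdw hdu huu
    (fun i => ({d, w, u i, u (i + 1)} : Finset (EuclideanSpace ℝ (Fin N))))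
    ?_ (fun i h1 h2 => hCB (hmC i h1 h2)) ?_ Δ' (fun i h => (hΔ' i h).1)
    (fun i h => (hΔ' i h).2.2.1) ?_ ?_ ?_ ?_ ?_ ?_ ?_
  · intro σ τ hσ hτ hne
    exact B.down_closed hσ hτ hne
  · intro σ F G H hσ hF hG hH hF4 hG4 hH4 h1 h2 h3
    exact tri_le_two B hball σ F G H hσ hF hG hH hF4 hG4 hH4 h1 h2 h3
  · intro i v
    simp only [Finset.mem_insert, Finset.mem_singleton]
  · intro e he hde i h1 h2 hsub
    refine hedges e ?_ hde he
    rw [hC]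
    exact ⟨Finset.ne_empty_of_mem hde, i, h1, h2, hsub⟩
  · intro i hi j h1 h2 h
    exact (hΔ' i hi).2.1 (h ▸ hmC j h1 h2)
  · intro i hi
    exact (hΔ' i hi).2.2.2.1 (Finset.mem_insert_self _ _)
  · exact hsub0 (by rw [hε0]; simp only [Finset.mem_insert, Finset.mem_singleton]; tauto)
  · exact hsub0 (by rw [hε0]; simp only [Finset.mem_insert, Finset.mem_singleton]; tauto)
  · intro i h1 h2
    have hs := (hΔ' i (by omega)).2.2.2.1
    rw [hεi i h1 h2] at hs
    exact ⟨hs (by simp only [Finset.mem_insert, Finset.mem_singleton]; tauto),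
      hs (by simp only [Finset.mem_insert, Finset.mem_singleton]; tauto)⟩
  · exact hsubk (by rw [hεk]; simp only [Finset.mem_insert, Finset.mem_singleton]; tauto)
  · exact hsubk (by rw [hεk]; simp only [Finset.mem_insert, Finset.mem_singleton]; tauto)

end PaperFormal
end
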